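/- arXiv:0809.3476 — 2 statements merged into one kernel-verified Lean document; each statement's English description precedes it below -/
import Mathlib

section
/- The number of minimal factorizations of the n-cycle (1 2 … n) into n − 1 transpositions (counting different orderings as different) equals n^{n−2}. -/
/-!
Call a permutation rooted if one point is marked on each of its cycles. Multiplying `σ` by a
transposition `(x y)` merges the cycles of `x` and `y` if these are different, and splits the cycle
of `x` and `y` otherwise. Merging cycles of lengths `a` and `b` multiplies the number of rootings by
`(a + b) / (a * b)`, and exactly `a * b` transpositions merge these two cycles; so, summed over all
transpositions that merge two of the `c` cycles of `σ`, the number of rootings gets multiplied by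
`∑ (a + b) = n * (c - 1)`, the sum being over pairs of cycles.

Starting from the identity, with its `n` cycles and single rooting, `n - 1` successive mergings thus
lead to `n ^ (n - 1) * (n - 1)!` rooted permutations in total. All sequences of `n - 1` mergings end
in one of the `(n - 1)!` full cycles, which has `n` rootings, and conversely each step of a minimal
factorization of a full cycle is a merging. The full cycles are conjugate, so each has the same
number `N` of minimal factorizations, and `(n - 1)! * N * n = n ^ (n - 1) * (n - 1)!`.
-/

section

open Equiv Equiv.Perm Finset

section Sums

variable {α M : Type*} [AddCommMonoid M]

lemma sum_offDiag_fst_add_snd (s : Finset α) (f : α → M) :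
    ∑ p ∈ s.offDiag, (f p.1 + f p.2) = 2 • (#s - 1) • ∑ a ∈ s, f a := by
  classical
  have sum_fst : ∑ p ∈ s.offDiag, f p.1 = (#s - 1) • ∑ a ∈ s, f a := by
    rw [sum_finset_product _ s (fun a ↦ s.erase a) (by simp; tauto), smul_sum]
    exact sum_congr rfl fun a ha ↦ by simp [card_erase_of_mem ha]
  have sum_snd : ∑ p ∈ s.offDiag, f p.2 = ∑ p ∈ s.offDiag, f p.1 :=
    sum_nbij' Prod.swap Prod.swap (by simp; tauto) (by simp; tauto) (by simp) (by simp) (by simp)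
  rw [sum_add_distrib, sum_snd, sum_fst, two_nsmul]

lemma sum_product_filter_part_ne [DecidableEq α] {s : Finset α} (P : Finpartition s)
    (f : Finset α × Finset α → M) :
    ∑ p ∈ s ×ˢ s with P.part p.1 ≠ P.part p.2, f (P.part p.1, P.part p.2) =
      ∑ q ∈ P.parts.offDiag, (#q.1 * #q.2) • f q := by
  rw [← sum_fiberwise_of_maps_to (t := P.parts.offDiag)
    (g := fun p ↦ (P.part p.1, P.part p.2)) (by simp; tauto)]
  refine sum_congr rfl fun ⟨A, B⟩ hq ↦ ?_
  obtain ⟨hA, hB, hAB⟩ := mem_offDiag.1 hq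
  have fiber_eq : {p ∈ {p ∈ s ×ˢ s | P.part p.1 ≠ P.part p.2} |
      (P.part p.1, P.part p.2) = (A, B)} = A ×ˢ B := by
    ext ⟨a, b⟩
    simp only [mem_filter, mem_product, Prod.mk.injEq, P.part_eq_iff_mem hA,
      P.part_eq_iff_mem hB]
    refine ⟨fun h ↦ h.2, fun h ↦ ⟨⟨⟨P.subset hA h.1, P.subset hB h.2⟩, ?_⟩, h⟩⟩
    rwa [P.part_eq_of_mem hA h.1, P.part_eq_of_mem hB h.2]
  rw [sum_congr rfl fun p hp ↦ congrArg f (mem_filter.1 hp).2, fiber_eq, sum_const, card_product]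

end Sums

lemma union_notMem_erase_erase {α : Type*} [DecidableEq α] {s : Finset α} {P : Finpartition s}
    {A B : Finset α} (hA : A ∈ P.parts) : A ∪ B ∉ (P.parts.erase A).erase B := by
  intro hmem
  obtain ⟨-, ne, hunion⟩ : _ ∧ _ ∧ _ := by simpa only [mem_erase] using hmem
  have disjoint_union : Disjoint (A ∪ B) A := P.disjoint hunion hA ne
  exact P.ne_bot hA (disjoint_self.1 (disjoint_union.mono_left subset_union_left))

section SameCycle

variable {α : Type*} {σ : Perm α} {x y : α}

lemma sameCycle_setoid_le_iff {r : Setoid α} : SameCycle.setoid σ ≤ r ↔ ∀ a, r a (σ a) := by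
  refine ⟨fun h a ↦ h (sameCycle_apply_right.2 (.refl σ a)), ?_⟩
  rintro h a _ ⟨i, rfl⟩
  induction i with
  | zero => exact r.refl a
  | succ i ih =>
    rw [add_comm, zpow_add, zpow_one]
    exact r.trans ih (h _)
  | pred i ih =>
    refine r.trans ih (r.symm ?_)
    have := h ((σ ^ (-(i : ℤ) - 1)) a)
    rwa [← mul_apply, mul_self_zpow, sub_add_cancel] at this

variable [DecidableEq α]

lemma sameCycle_setoid_swap_mul_le {r : Setoid α} (hσ : SameCycle.setoid σ ≤ r) (hxy : r x y) :
    SameCycle.setoid (swap x y * σ) ≤ r := by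
  have rel_swap (b : α) : r b (swap x y b) := by
    rw [swap_apply_def]
    split_ifs with hbx hby
    · exact hbx ▸ hxy
    · exact hby ▸ r.symm hxy
    · exact r.refl b
  exact sameCycle_setoid_le_iff.2 fun a ↦
    r.trans (sameCycle_setoid_le_iff.1 hσ a) (rel_swap (σ a))

lemma iff_of_sameCycle_swap_mul {p : α → Prop} {a b : α} (hσ : ∀ c, p (σ c) ↔ p c)
    (hxy : p x ↔ p y) (hab : SameCycle (swap x y * σ) a b) : p a ↔ p b := by
  have setoid_le : SameCycle.setoid σ ≤ Setoid.ker p :=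
    sameCycle_setoid_le_iff.2 fun c ↦ (propext (hσ c)).symm
  exact iff_of_eq (sameCycle_setoid_swap_mul_le setoid_le (propext hxy) hab)

lemma sameCycle_swap_mul_of_not_sameCycle [Finite α] (h : ¬SameCycle σ x y) :
    SameCycle (swap x y * σ) x y := by
  have sameCycle_pow (k : ℕ) : SameCycle (swap x y * σ) y ((σ ^ k) y) := by
    induction k with
    | zero => exact .refl _ y
    | succ k ih =>
      have ne_x : (σ ^ (k + 1)) y ≠ x := fun e ↦ h (e ▸ sameCycle_pow_left.2 (.refl σ y))
      by_cases eq_y : (σ ^ (k + 1)) y = y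
      · rw [eq_y]
      · have : (swap x y * σ) ((σ ^ k) y) = (σ ^ (k + 1)) y := by
          rw [mul_apply, ← mul_apply σ, ← pow_succ', swap_apply_of_ne_of_ne ne_x eq_y]
        rw [← this]
        exact sameCycle_apply_right.2 ih
  obtain ⟨k, hk⟩ := (sameCycle_symm_apply_right.2 (.refl σ y)).exists_nat_pow_eq
  have := sameCycle_apply_right.2 (hk ▸ sameCycle_pow k)
  simpa using this.symm

lemma sameCycle_setoid_le_swap_mul [Finite α] (h : ¬SameCycle σ x y) :
    SameCycle.setoid σ ≤ SameCycle.setoid (swap x y * σ) := by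
  simpa using sameCycle_setoid_swap_mul_le le_rfl (sameCycle_swap_mul_of_not_sameCycle h)

end SameCycle

section CyclePartition

variable {α : Type*} [Fintype α] [DecidableEq α] {σ : Perm α} {x y a b : α}

/-- The partition of `α` into the cycles of `σ`, fixed points forming cycles of length one. -/
def cyclePartition (σ : Perm α) : Finpartition (univ : Finset α) :=
  letI : DecidableRel (SameCycle.setoid σ).r := inferInstanceAs (DecidableRel (SameCycle σ))
  Finpartition.ofSetoid (SameCycle.setoid σ)

/-- The number of cycles of `σ`, counting fixed points. -/
def cycleCount (σ : Perm α) : ℕ := #(cyclePartition σ).parts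

/-- The product of the cycle lengths of `σ`, that is, the number of ways of marking one point on
each cycle of `σ`. -/
def cycleLengthProd (σ : Perm α) : ℕ := ∏ A ∈ (cyclePartition σ).parts, #A

lemma mem_part_cyclePartition : b ∈ (cyclePartition σ).part a ↔ SameCycle σ a b :=
  letI : DecidableRel (SameCycle.setoid σ).r := inferInstanceAs (DecidableRel (SameCycle σ))
  Finpartition.mem_part_ofSetoid_iff_rel

lemma part_cyclePartition_eq_iff :
    (cyclePartition σ).part a = (cyclePartition σ).part b ↔ SameCycle σ a b := by
  rw [← (cyclePartition σ).mem_part_iff_part_eq_part (mem_univ a) (mem_univ b),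
    mem_part_cyclePartition, sameCycle_comm]

lemma part_mem_cyclePartition_parts (σ : Perm α) (a : α) :
    (cyclePartition σ).part a ∈ (cyclePartition σ).parts :=
  (cyclePartition σ).part_mem.2 (mem_univ a)

lemma mem_cyclePartition_parts {A : Finset α} :
    A ∈ (cyclePartition σ).parts ↔ ∃ a, (cyclePartition σ).part a = A := by
  refine ⟨fun hA ↦ ?_, ?_⟩
  · obtain ⟨a, -, ha⟩ := (cyclePartition σ).part_surjOn hA
    exact ⟨a, ha⟩
  · rintro ⟨a, rfl⟩
    exact part_mem_cyclePartition_parts σ a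

lemma cyclePartition_mono {τ : Perm α} (h : SameCycle.setoid σ ≤ SameCycle.setoid τ) :
    cyclePartition σ ≤ cyclePartition τ := by
  intro A hA
  obtain ⟨a, rfl⟩ := mem_cyclePartition_parts.1 hA
  refine ⟨_, part_mem_cyclePartition_parts τ a, fun b hb ↦ ?_⟩
  rw [mem_part_cyclePartition] at hb ⊢
  exact h hb

lemma cyclePartition_one : cyclePartition (1 : Perm α) = ⊥ := by
  ext A
  simp [mem_cyclePartition_parts, Finset.ext_iff,
    mem_part_cyclePartition, eq_comm]

lemma cycleCount_one : cycleCount (1 : Perm α) = Fintype.card α := by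
  rw [cycleCount, cyclePartition_one, Finpartition.card_bot, card_univ]

lemma cycleLengthProd_one : cycleLengthProd (1 : Perm α) = 1 := by
  simp [cycleLengthProd, cyclePartition_one, Finpartition.parts_bot]

lemma cycleType_eq_singleton_card_iff [Nontrivial α] :
    σ.cycleType = {Fintype.card α} ↔ ∀ a b, SameCycle σ a b := by
  refine ⟨fun h a b ↦ ?_, fun h ↦ ?_⟩
  · have isCycle : σ.IsCycle := by rw [← card_cycleType_eq_one, h, Multiset.card_singleton]
    have support_eq : σ.support = univ := by
      rw [isCycle.cycleType, Multiset.singleton_inj] at h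
      exact eq_univ_of_card _ h
    have apply_ne (c : α) : σ c ≠ c := by simp [← mem_support, support_eq]
    exact isCycle.sameCycle (apply_ne a) (apply_ne b)
  · have apply_ne (a : α) : σ a ≠ a := fun ha ↦
      have ⟨b, hb⟩ := exists_ne a
      hb ((h a b).eq_of_left ha).symm
    have support_eq : σ.support = univ := by ext; simp [apply_ne]
    obtain ⟨a⟩ : Nonempty α := inferInstance
    have isCycle : σ.IsCycle := ⟨a, apply_ne a, fun b _ ↦ h a b⟩
    rw [isCycle.cycleType, support_eq, card_univ]

lemma cycleCount_eq_one_iff [Nonempty α] : cycleCount σ = 1 ↔ ∀ a b, SameCycle σ a b := by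
  refine ⟨fun h a b ↦ ?_, fun h ↦ ?_⟩
  · rw [← part_cyclePartition_eq_iff]
    exact card_le_one.1 h.le _ (part_mem_cyclePartition_parts σ a) _
      (part_mem_cyclePartition_parts σ b)
  · obtain ⟨a⟩ := ‹Nonempty α›
    refine card_eq_one.2 ⟨(cyclePartition σ).part a, eq_singleton_iff_unique_mem.2
      ⟨part_mem_cyclePartition_parts σ a, fun A hA ↦ ?_⟩⟩
    obtain ⟨b, rfl⟩ := mem_cyclePartition_parts.1 hA
    exact part_cyclePartition_eq_iff.2 (h b a)

lemma cycleCount_eq_one_iff_cycleType_eq [Nontrivial α] :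
    cycleCount σ = 1 ↔ σ.cycleType = {Fintype.card α} :=
  cycleCount_eq_one_iff.trans cycleType_eq_singleton_card_iff.symm

lemma cycleLengthProd_of_cycleCount_eq_one (h : cycleCount σ = 1) :
    cycleLengthProd σ = Fintype.card α := by
  obtain ⟨A, hA⟩ := card_eq_one.1 h
  rw [cycleLengthProd, hA, prod_singleton, ← sum_singleton card A, ← hA,
    (cyclePartition σ).sum_card_parts, card_univ]

end CyclePartition

section SwapMul

variable {α : Type*} [Fintype α] [DecidableEq α] {σ : Perm α} {x y a b : α}

lemma cycleCount_le_cycleCount_swap_mul (h : SameCycle σ x y) :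
    cycleCount σ ≤ cycleCount (swap x y * σ) :=
  Finpartition.card_mono (cyclePartition_mono (sameCycle_setoid_swap_mul_le le_rfl h))

lemma part_cyclePartition_swap_mul (h : ¬SameCycle σ x y)
    (ha : SameCycle σ x a ∨ SameCycle σ y a) :
    (cyclePartition (swap x y * σ)).part a =
      (cyclePartition σ).part x ∪ (cyclePartition σ).part y := by
  have sameCycle_left {c : α} (hc : SameCycle σ x c ∨ SameCycle σ y c) :
      SameCycle (swap x y * σ) x c :=
    hc.elim (sameCycle_setoid_le_swap_mul h ·) fun hy ↦
      (sameCycle_swap_mul_of_not_sameCycle h).trans (sameCycle_setoid_le_swap_mul h hy)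
  ext b
  simp only [mem_union, mem_part_cyclePartition]
  refine ⟨fun hab ↦ ?_, fun hb ↦ (sameCycle_left ha).symm.trans (sameCycle_left hb)⟩
  exact (iff_of_sameCycle_swap_mul (p := fun c ↦ SameCycle σ x c ∨ SameCycle σ y c)
    (by simp) (by simp [SameCycle.refl]) hab).1 ha

lemma part_cyclePartition_swap_mul_of_not_sameCycle (h : ¬SameCycle σ x y)
    (hx : ¬SameCycle σ a x) (hy : ¬SameCycle σ a y) :
    (cyclePartition (swap x y * σ)).part a = (cyclePartition σ).part a := by
  ext b
  simp only [mem_part_cyclePartition]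
  refine ⟨fun hab ↦ ?_, fun hab ↦ sameCycle_setoid_le_swap_mul h hab⟩
  exact (iff_of_sameCycle_swap_mul (p := SameCycle σ a) (by simp) (by simp [hx, hy]) hab).1
    (.refl σ a)

lemma cyclePartition_swap_mul_parts (h : ¬SameCycle σ x y) :
    (cyclePartition (swap x y * σ)).parts =
      insert ((cyclePartition σ).part x ∪ (cyclePartition σ).part y)
        (((cyclePartition σ).parts.erase ((cyclePartition σ).part x)).erase
          ((cyclePartition σ).part y)) := by
  ext A
  simp only [mem_insert, mem_erase, mem_cyclePartition_parts]
  constructor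
  · rintro ⟨a, rfl⟩
    by_cases ha : SameCycle σ x a ∨ SameCycle σ y a
    · exact .inl (part_cyclePartition_swap_mul h ha)
    · simp only [not_or, sameCycle_comm (y := a)] at ha
      rw [part_cyclePartition_swap_mul_of_not_sameCycle h ha.1 ha.2]
      exact .inr ⟨mt part_cyclePartition_eq_iff.1 ha.2, mt part_cyclePartition_eq_iff.1 ha.1,
        a, rfl⟩
  · rintro (rfl | ⟨hy, hx, a, rfl⟩)
    · exact ⟨x, part_cyclePartition_swap_mul h (.inl (.refl σ x))⟩
    · rw [ne_eq, part_cyclePartition_eq_iff] at hx hy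
      exact ⟨a, part_cyclePartition_swap_mul_of_not_sameCycle h hx hy⟩

lemma cycleCount_swap_mul (h : ¬SameCycle σ x y) :
    cycleCount (swap x y * σ) + 1 = cycleCount σ := by
  have hx := part_mem_cyclePartition_parts σ x
  have hy : (cyclePartition σ).part y ∈
      (cyclePartition σ).parts.erase ((cyclePartition σ).part x) :=
    mem_erase.2 ⟨mt (part_cyclePartition_eq_iff.1 ∘ Eq.symm) h, part_mem_cyclePartition_parts σ y⟩
  rw [cycleCount, cyclePartition_swap_mul_parts h,
    card_insert_of_notMem (union_notMem_erase_erase hx), card_erase_add_one hy,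
    card_erase_add_one hx, cycleCount]

lemma cycleCount_swap_mul_iff : cycleCount (swap x y * σ) + 1 = cycleCount σ ↔ ¬SameCycle σ x y :=
  ⟨fun h hxy ↦ by have := cycleCount_le_cycleCount_swap_mul hxy; lia, cycleCount_swap_mul⟩

lemma cycleCount_le_cycleCount_mul_add_one {τ : Perm α} (hτ : τ.IsSwap) (σ : Perm α) :
    cycleCount σ ≤ cycleCount (τ * σ) + 1 := by
  obtain ⟨x, y, -, rfl⟩ := hτ
  by_cases h : SameCycle σ x y
  · exact (cycleCount_le_cycleCount_swap_mul h).trans (Nat.le_succ _)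
  · exact (cycleCount_swap_mul h).ge

lemma cycleLengthProd_swap_mul (h : ¬SameCycle σ x y) :
    cycleLengthProd (swap x y * σ) =
      (#((cyclePartition σ).part x) + #((cyclePartition σ).part y)) *
        ∏ A ∈ ((cyclePartition σ).parts.erase ((cyclePartition σ).part x)).erase
          ((cyclePartition σ).part y), #A := by
  have disjoint_part : Disjoint ((cyclePartition σ).part x) ((cyclePartition σ).part y) :=
    (cyclePartition σ).disjoint (part_mem_cyclePartition_parts σ x)
      (part_mem_cyclePartition_parts σ y) (mt part_cyclePartition_eq_iff.1 h)
  rw [cycleLengthProd, cyclePartition_swap_mul_parts h,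
    prod_insert (union_notMem_erase_erase (part_mem_cyclePartition_parts σ x)),
    card_union_of_disjoint disjoint_part]

end SwapMul

section Swaps

variable {α : Type*} [DecidableEq α]

lemma swap_eq_swap_iff {a b c d : α} (hab : a ≠ b) (hcd : c ≠ d) :
    swap a b = swap c d ↔ a = c ∧ b = d ∨ a = d ∧ b = c := by
  refine ⟨fun h ↦ ?_, ?_⟩
  · have := congrArg (· a) h
    grind
  · rintro (⟨rfl, rfl⟩ | ⟨rfl, rfl⟩)
    exacts [rfl, swap_comm _ _]

lemma isSwap_conj_iff {σ τ : Perm α} : (σ * τ * σ⁻¹).IsSwap ↔ τ.IsSwap := by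
  have isSwap_conj (ρ : Perm α) {τ : Perm α} : τ.IsSwap → (ρ * τ * ρ⁻¹).IsSwap := by
    rintro ⟨x, y, hxy, rfl⟩
    exact ⟨ρ x, ρ y, ρ.injective.ne hxy, (swap_apply_apply ρ x y).symm⟩
  exact ⟨fun h ↦ by simpa [mul_assoc] using isSwap_conj σ⁻¹ h, isSwap_conj σ⟩

end Swaps

section MergingSwaps

variable {α : Type*} [Fintype α] [DecidableEq α]

instance : DecidablePred (IsSwap (α := α)) :=
  fun τ ↦ inferInstanceAs (Decidable (∃ x y, x ≠ y ∧ τ = swap x y))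

/-- The transpositions `τ` for which `τ * σ` arises from `σ` by merging two cycles. -/
def mergingSwaps (σ : Perm α) : Finset (Perm α) :=
  {τ | τ.IsSwap ∧ cycleCount (τ * σ) + 1 = cycleCount σ}

lemma swap_mem_mergingSwaps_iff {σ : Perm α} {x y : α} :
    swap x y ∈ mergingSwaps σ ↔ ¬SameCycle σ x y := by
  rw [mergingSwaps, mem_filter_univ, cycleCount_swap_mul_iff, and_iff_right_iff_imp]
  exact fun h ↦ ⟨x, y, fun hxy ↦ h (hxy.sameCycle σ), rfl⟩

lemma sum_swap_of_not_sameCycle {M : Type*} [AddCommMonoid M] (σ : Perm α) (f : Perm α → M) :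
    ∑ p : α × α with ¬SameCycle σ p.1 p.2, f (swap p.1 p.2) = 2 • ∑ τ ∈ mergingSwaps σ, f τ := by
  rw [← sum_fiberwise_of_maps_to (t := mergingSwaps σ) (g := fun p ↦ swap p.1 p.2)
    (by simp [swap_mem_mergingSwaps_iff]), smul_sum]
  refine sum_congr rfl fun τ hτ ↦ ?_
  obtain ⟨a, b, hab, rfl⟩ := (mem_filter.1 hτ).2.1
  have not_sameCycle : ¬SameCycle σ a b := swap_mem_mergingSwaps_iff.1 hτ
  have fiber_eq : ({p | ¬SameCycle σ p.1 p.2} : Finset (α × α)).filter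
      (fun p ↦ swap p.1 p.2 = swap a b) = {(a, b), (b, a)} := by
    ext ⟨c, d⟩
    simp only [mem_filter, mem_univ, true_and, mem_insert, mem_singleton, Prod.mk.injEq]
    constructor
    · rintro ⟨hcd, heq⟩
      exact (swap_eq_swap_iff (fun e ↦ hcd (e.sameCycle σ)) hab).1 heq
    · rintro (⟨rfl, rfl⟩ | ⟨rfl, rfl⟩)
      · exact ⟨not_sameCycle, rfl⟩
      · exact ⟨mt SameCycle.symm not_sameCycle, swap_comm _ _⟩
  rw [sum_congr rfl fun p hp ↦ congrArg f (mem_filter.1 hp).2, fiber_eq, sum_const,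
    card_pair (by simp [hab])]

lemma sum_cycleLengthProd_mergingSwaps (σ : Perm α) :
    ∑ τ ∈ mergingSwaps σ, cycleLengthProd (τ * σ) =
      cycleLengthProd σ * (Fintype.card α * (cycleCount σ - 1)) := by
  set P := cyclePartition σ with hP
  have mul_prod_erase_erase {q : Finset α × Finset α} (hq : q ∈ P.parts.offDiag) :
      #q.1 * #q.2 * ((#q.1 + #q.2) * ∏ A ∈ (P.parts.erase q.1).erase q.2, #A) =
        (#q.1 + #q.2) * cycleLengthProd σ := by
    obtain ⟨h₁, h₂, ne⟩ := mem_offDiag.1 hq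
    rw [cycleLengthProd, ← mul_prod_erase _ _ h₁, ← mul_prod_erase _ _ (mem_erase.2 ⟨ne.symm, h₂⟩)]
    ring
  refine mul_left_cancel₀ two_ne_zero ?_
  calc
    2 * ∑ τ ∈ mergingSwaps σ, cycleLengthProd (τ * σ)
      = ∑ p : α × α with ¬SameCycle σ p.1 p.2, cycleLengthProd (swap p.1 p.2 * σ) := by
        rw [sum_swap_of_not_sameCycle σ (fun τ ↦ cycleLengthProd (τ * σ)), smul_eq_mul]
    _ = ∑ p ∈ univ ×ˢ univ with P.part p.1 ≠ P.part p.2, (#(P.part p.1) + #(P.part p.2)) *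
          ∏ A ∈ (P.parts.erase (P.part p.1)).erase (P.part p.2), #A := by
        simp only [ne_eq, hP, part_cyclePartition_eq_iff, univ_product_univ]
        exact sum_congr rfl fun p hp ↦ cycleLengthProd_swap_mul (mem_filter.1 hp).2
    _ = ∑ q ∈ P.parts.offDiag, (#q.1 + #q.2) * cycleLengthProd σ := by
        rw [sum_product_filter_part_ne P (fun q ↦ (#q.1 + #q.2) *
          ∏ A ∈ (P.parts.erase q.1).erase q.2, #A)]
        exact sum_congr rfl fun q hq ↦ mul_prod_erase_erase hq
    _ = 2 * (cycleLengthProd σ * (Fintype.card α * (cycleCount σ - 1))) := by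
        rw [← sum_mul, sum_offDiag_fst_add_snd, P.sum_card_parts, card_univ, smul_eq_mul,
          smul_eq_mul, cycleCount]
        ring

end MergingSwaps

section ReverseProd

variable {M N : Type*} [Monoid M] [Monoid N] {k : ℕ}

/-- The product `f (k - 1) * ⋯ * f 1 * f 0`. -/
def reverseProd (f : Fin k → M) : M := (List.ofFn f).reverse.prod

lemma reverseProd_zero (f : Fin 0 → M) : reverseProd f = 1 := by simp [reverseProd]

lemma reverseProd_snoc (f : Fin k → M) (a : M) :
    reverseProd (Fin.snoc f a : Fin (k + 1) → M) = a * reverseProd f := by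
  rw [reverseProd, List.ofFn_succ']
  simp [List.concat_eq_append, reverseProd]

lemma map_reverseProd (φ : M →* N) (f : Fin k → M) :
    φ (reverseProd f) = reverseProd (φ ∘ f) := by
  simp [reverseProd, map_list_prod, List.map_ofFn]

end ReverseProd

section MergingSeqs

variable {α : Type*} [DecidableEq α] {k : ℕ}

lemma forall_snoc_isSwap_iff {f : Fin k → Perm α} {τ : Perm α} :
    (∀ i, ((Fin.snoc f τ : Fin (k + 1) → Perm α) i).IsSwap) ↔ (∀ i, (f i).IsSwap) ∧ τ.IsSwap := by
  simp [Fin.forall_fin_succ']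

variable [Fintype α]

lemma card_le_cycleCount_reverseProd_add {f : Fin k → Perm α} (hf : ∀ i, (f i).IsSwap) :
    Fintype.card α ≤ cycleCount (reverseProd f) + k := by
  induction f using Fin.snocInduction with
  | elim0 => simp [reverseProd_zero, cycleCount_one]
  | snoc f τ ih =>
    rw [forall_snoc_isSwap_iff] at hf
    have := cycleCount_le_cycleCount_mul_add_one hf.2 (reverseProd f)
    have := ih hf.1
    rw [reverseProd_snoc]
    lia

variable (α k) in
/-- The sequences of `k` transpositions of `α` that, multiplied successively from the left onto the
identity, merge two cycles at each step. Equivalently, their product has the least possible number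
`Fintype.card α - k` of cycles, which is the encoding chosen here. -/
def mergingSeqs : Finset (Fin k → Perm α) :=
  {f | (∀ i, (f i).IsSwap) ∧ cycleCount (reverseProd f) + k = Fintype.card α}

lemma snoc_mem_mergingSeqs_iff {f : Fin k → Perm α} {τ : Perm α} :
    (Fin.snoc f τ : Fin (k + 1) → Perm α) ∈ mergingSeqs α (k + 1) ↔
      f ∈ mergingSeqs α k ∧ τ ∈ mergingSwaps (reverseProd f) := by
  simp only [mergingSeqs, mergingSwaps, mem_filter_univ, forall_snoc_isSwap_iff, reverseProd_snoc]
  constructor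
  · rintro ⟨⟨hf, hτ⟩, hcount⟩
    have := card_le_cycleCount_reverseProd_add hf
    have := cycleCount_le_cycleCount_mul_add_one hτ (reverseProd f)
    exact ⟨⟨hf, by lia⟩, hτ, by lia⟩
  · rintro ⟨⟨hf, hcount⟩, hτ, hmerge⟩
    exact ⟨⟨hf, hτ⟩, by lia⟩

lemma sum_mergingSeqs_succ {M : Type*} [AddCommMonoid M] (F : Perm α → M) :
    ∑ f ∈ mergingSeqs α (k + 1), F (reverseProd f) =
      ∑ f ∈ mergingSeqs α k, ∑ τ ∈ mergingSwaps (reverseProd f), F (τ * reverseProd f) := by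
  rw [sum_sigma']
  refine (sum_bij (fun p _ ↦ (Fin.snoc p.1 p.2 : Fin (k + 1) → Perm α)) ?_ ?_ ?_ ?_).symm
  · exact fun p hp ↦ snoc_mem_mergingSeqs_iff.2 (mem_sigma.1 hp)
  · rintro ⟨f, τ⟩ - ⟨g, ρ⟩ - h
    obtain ⟨rfl, rfl⟩ := Fin.snoc_inj.1 h
    rfl
  · intro f hf
    rw [← Fin.snoc_init_self f, snoc_mem_mergingSeqs_iff] at hf
    exact ⟨⟨Fin.init f, f (Fin.last k)⟩, mem_sigma.2 hf, Fin.snoc_init_self f⟩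
  · exact fun p _ ↦ by rw [reverseProd_snoc]

variable (α k) in
lemma sum_cycleLengthProd_mergingSeqs :
    ∑ f ∈ mergingSeqs α k, cycleLengthProd (reverseProd f) =
      Fintype.card α ^ k * (Fintype.card α - 1).descFactorial k := by
  induction k with
  | zero => simp [mergingSeqs, reverseProd_zero, cycleCount_one, cycleLengthProd_one]
  | succ k ih =>
    have cycleCount_sub_one {f : Fin k → Perm α} (hf : f ∈ mergingSeqs α k) :
        cycleCount (reverseProd f) - 1 = Fintype.card α - 1 - k := by
      have := (mem_filter.1 hf).2.2
      lia
    calc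
      ∑ f ∈ mergingSeqs α (k + 1), cycleLengthProd (reverseProd f)
        = ∑ f ∈ mergingSeqs α k, cycleLengthProd (reverseProd f) *
            (Fintype.card α * (Fintype.card α - 1 - k)) := by
          rw [sum_mergingSeqs_succ]
          exact sum_congr rfl fun f hf ↦ by
            rw [sum_cycleLengthProd_mergingSwaps, cycleCount_sub_one hf]
      _ = Fintype.card α ^ (k + 1) * (Fintype.card α - 1).descFactorial (k + 1) := by
          rw [← sum_mul, ih, Nat.descFactorial_succ]
          ring

end MergingSeqs

section SwapFactorizations

variable {α : Type*} [Fintype α] [DecidableEq α]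

/-- The factorizations `σ = τ_k ⋯ τ_1` of `σ` into `k` transpositions, `τ_i` being stored at index
`i - 1`. -/
def swapFactorizations (k : ℕ) (σ : Perm α) : Finset (Fin k → Perm α) :=
  {f | (∀ i, (f i).IsSwap) ∧ reverseProd f = σ}

lemma card_swapFactorizations_of_isConj (k : ℕ) {σ τ : Perm α} (h : IsConj σ τ) :
    #(swapFactorizations k σ) = #(swapFactorizations k τ) := by
  obtain ⟨g, rfl⟩ := isConj_iff.1 h
  let conjSeq : (Fin k → Perm α) ≃ (Fin k → Perm α) :=
    piCongrRight fun _ ↦ (MulAut.conj g).toEquiv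
  have reverseProd_conjSeq (f) : reverseProd (conjSeq f) = g * reverseProd f * g⁻¹ :=
    (map_reverseProd (MulAut.conj g).toMonoidHom f).symm
  refine card_equiv conjSeq fun f ↦ ?_
  rw [swapFactorizations, mem_filter_univ, swapFactorizations, mem_filter_univ,
    reverseProd_conjSeq, mul_left_inj, mul_right_inj]
  exact and_congr_left fun _ ↦ forall_congr' fun _ ↦ isSwap_conj_iff.symm

lemma card_filter_cycleType_eq_singleton_card [Nontrivial α] :
    #{σ : Perm α | σ.cycleType = {Fintype.card α}} = (Fintype.card α - 1).factorial := by
  rw [card_of_cycleType_singleton Fintype.one_lt_card le_rfl, Nat.choose_self, mul_one]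

lemma mem_mergingSeqs_card_sub_one_iff [Nontrivial α] {f : Fin (Fintype.card α - 1) → Perm α} :
    f ∈ mergingSeqs α (Fintype.card α - 1) ↔
      (∀ i, (f i).IsSwap) ∧ (reverseProd f).cycleType = {Fintype.card α} := by
  have one_lt_card := Fintype.one_lt_card (α := α)
  rw [mergingSeqs, mem_filter_univ, ← cycleCount_eq_one_iff_cycleType_eq]
  exact and_congr_right fun _ ↦ by lia

lemma nontrivial_of_cycleType_eq_singleton_card {c : Perm α}
    (hc : c.cycleType = {Fintype.card α}) : Nontrivial α :=
  Fintype.one_lt_card_iff_nontrivial.1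
    (two_le_of_mem_cycleType (hc ▸ Multiset.mem_singleton_self _))

lemma card_mergingSeqs_card_sub_one {c : Perm α}
    (hc : c.cycleType = {Fintype.card α}) :
    #(mergingSeqs α (Fintype.card α - 1)) =
      (Fintype.card α - 1).factorial * #(swapFactorizations (Fintype.card α - 1) c) := by
  have := nontrivial_of_cycleType_eq_singleton_card hc
  rw [← card_filter_cycleType_eq_singleton_card, card_eq_sum_card_fiberwise (f := reverseProd)
    (t := ({σ | σ.cycleType = {Fintype.card α}} : Finset (Perm α)))
    (fun f hf ↦ by simpa using (mem_mergingSeqs_card_sub_one_iff.1 hf).2)]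
  refine sum_const_nat fun σ hσ ↦ ?_
  rw [mem_filter_univ] at hσ
  rw [card_swapFactorizations_of_isConj _ (isConj_iff_cycleType_eq.2 (hc.trans hσ.symm))]
  congr 1
  ext f
  simp only [mem_filter, mem_mergingSeqs_card_sub_one_iff, swapFactorizations, mem_univ, true_and]
  exact ⟨fun h ↦ ⟨h.1.1, h.2⟩, fun h ↦ ⟨⟨h.1, h.2 ▸ hσ⟩, h.2⟩⟩

lemma sum_cycleLengthProd_mergingSeqs_card_sub_one [Nontrivial α] :
    ∑ f ∈ mergingSeqs α (Fintype.card α - 1), cycleLengthProd (reverseProd f) =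
      #(mergingSeqs α (Fintype.card α - 1)) * Fintype.card α :=
  sum_const_nat fun _ hf ↦ cycleLengthProd_of_cycleCount_eq_one
    (cycleCount_eq_one_iff_cycleType_eq.2 (mem_mergingSeqs_card_sub_one_iff.1 hf).2)

lemma card_swapFactorizations_of_cycleType_eq {c : Perm α}
    (hc : c.cycleType = {Fintype.card α}) :
    #(swapFactorizations (Fintype.card α - 1) c) = Fintype.card α ^ (Fintype.card α - 2) := by
  have := nontrivial_of_cycleType_eq_singleton_card hc
  set n := Fintype.card α
  have one_lt_card : 1 < n := Fintype.one_lt_card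
  refine mul_left_cancel₀ (mul_ne_zero (Nat.factorial_ne_zero (n - 1)) (by lia : n ≠ 0)) ?_
  calc
    (n - 1).factorial * n * #(swapFactorizations (n - 1) c)
      = #(mergingSeqs α (n - 1)) * n := by
        rw [card_mergingSeqs_card_sub_one hc]
        ring
    _ = n ^ (n - 1) * (n - 1).factorial := by
        rw [← sum_cycleLengthProd_mergingSeqs_card_sub_one, sum_cycleLengthProd_mergingSeqs,
          Nat.descFactorial_self]
    _ = (n - 1).factorial * n * n ^ (n - 2) := by
        rw [mul_assoc, ← pow_succ', mul_comm]
        congr 2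
        lia

theorem denes_count_transposition_factorizations_general {α : Type*} [Fintype α] [DecidableEq α]
    (c : Perm α) (hc : c.cycleType = {Fintype.card α}) :
    Nat.card {f : Fin (Fintype.card α - 1) → Perm α //
      (∀ i, (f i).IsSwap) ∧ (List.ofFn f).reverse.prod = c} =
      Fintype.card α ^ (Fintype.card α - 2) := by
  rw [← card_swapFactorizations_of_cycleType_eq hc]
  exact Nat.subtype_card _ fun f ↦ by rw [swapFactorizations, mem_filter_univ, reverseProd]

end SwapFactorizations

end

/-- Dénes: the number of minimal factorizations of the `n`-cycle
`(1 2 … n)` (realized as `finRotate n`) into `n − 1` transpositions, counting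
different orderings as different, equals `n^(n−2)`.  A factorization
`τ_{n−1} ⋯ τ_1` is encoded as `f : Fin (n-1) → Perm (Fin n)` with `f i = τ_{i+1}`,
so the right-to-left product is `(List.ofFn f).reverse.prod`. -/
theorem denes_count_transposition_factorizations (n : ℕ) (hn : 2 ≤ n) :
    Nat.card {f : Fin (n - 1) → Equiv.Perm (Fin n) //
      (∀ i, (f i).IsSwap) ∧ (List.ofFn f).reverse.prod = finRotate n} =
      n ^ (n - 2) := by
  have := denes_count_transposition_factorizations_general (finRotate n)
    (by rw [cycleType_finRotate_of_le hn, Fintype.card_fin])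
  rwa [Fintype.card_fin] at this
end

section
/- Let T(n) denote the number of equivalence classes of factorizations of the n-cycle (1 2 … n) into n − 1 transpositions, where two factorizations are equivalent if one is obtained from the other by swapping adjacent commuting factors. Then the generating function ξ(x) = 1 + ∑_{n≥2} T(n) x^{n−1} satisfies ξ = 1 + x ξ^3. -/
/-- Equivalence of factorizations: generated by swapping two adjacent
commuting factors. -/
inductive FactEquiv {n : ℕ} : List (Equiv.Perm (Fin n)) → List (Equiv.Perm (Fin n)) → Prop
  | refl (l) : FactEquiv l l
  | swap (l₁ l₂ : List (Equiv.Perm (Fin n))) (a b : Equiv.Perm (Fin n)) (h : a * b = b * a) :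
      FactEquiv (l₁ ++ a :: b :: l₂) (l₁ ++ b :: a :: l₂)
  | trans {l₁ l₂ l₃} : FactEquiv l₁ l₂ → FactEquiv l₂ l₃ → FactEquiv l₁ l₃

/-- Factorizations of the `n`-cycle `(1 2 … n)` into `n − 1` transpositions. -/
def TransFact (n : ℕ) : Type :=
  {l : List (Equiv.Perm (Fin n)) //
    l.length = n - 1 ∧ (∀ σ ∈ l, σ.IsSwap) ∧ l.prod = finRotate n}

/-- `T n` = number of equivalence classes of factorizations of the `n`-cycle
into `n − 1` transpositions. -/
noncomputable def T (n : ℕ) : ℕ :=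
  Nat.card (Quot (fun l₁ l₂ : TransFact n => FactEquiv l₁.1 l₂.1))

/-- The generating function `ξ(x) = 1 + ∑_{n≥2} T(n) x^(n−1)`. -/
noncomputable def xi : PowerSeries ℚ :=
  PowerSeries.mk (fun k => if k = 0 then (1 : ℚ) else (T (k + 1) : ℚ))

/-!
Let `a` be the smallest point and let `(a m)` be the leftmost transposition of a minimal
factorization of the cycle on `[a, b]` that moves `a`. Moving it by Hurwitz moves to the end of the
transpositions `L` to its left, or to the front of the word as `(a p)` with `p = L(m)`, leaves a
product that agrees with the cycle except at one point; a count of edges then shows that no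
transposition crosses the cut at `m`, respectively at `p`. Hence every other transposition lies in
one of `[a, p - 1]`, `[p, m]` and `[m, b]`, and commutations bring the word into the form
`[p, m]`-part, `(a m)`, `[a, p - 1]`-part, `[m, b]`-part, where the three parts are again minimal
factorizations of cycles. Iterating, each commutation class has a canonical representative
indexed by a ternary tree, which can be recovered from its set of transpositions alone, so that
`ξ` is the generating function of ternary trees.
-/

open Equiv (Perm swap)
open Finset.HasAntidiagonal (antidiagonal mem_antidiagonal)

section MonoidWords

variable {α M : Type*} [Monoid M] {f : α → M}

theorem prod_map_eq_prod_filter_mul (p : α → Prop) [DecidablePred p] {l : List α}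
    (h : l.Pairwise fun x y => ¬p x → p y → Commute (f x) (f y)) :
    (l.map f).prod = ((l.filter (p ·)).map f).prod * ((l.filter (¬p ·)).map f).prod := by
  induction l with
  | nil => simp
  | cons x l ih =>
    obtain ⟨hx, hl⟩ := List.pairwise_cons.1 h
    by_cases hp : p x
    · simp [hp, ih hl, mul_assoc]
    · have hcomm : Commute (f x) ((l.filter (p ·)).map f).prod := by
        refine Commute.list_prod_right _ _ fun z hz => ?_
        obtain ⟨y, hy, rfl⟩ := List.mem_map.1 hz
        rw [List.mem_filter, decide_eq_true_eq] at hy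
        exact hx y hy.1 hp hy.2
      simp [hp, ih hl, ← mul_assoc, hcomm.eq]

theorem prod_map_eq_prod_range_filter (key : α → ℕ) {n : ℕ} {l : List α}
    (hn : ∀ x ∈ l, key x < n)
    (h : l.Pairwise fun x y => key y < key x → Commute (f x) (f y)) :
    (l.map f).prod =
      ((List.range n).map fun c => ((l.filter (key · = c)).map f).prod).prod := by
  induction n generalizing l with
  | zero => simp [List.eq_nil_iff_forall_not_mem.2 fun x hx => absurd (hn x hx) (by simp)]
  | succ n ih =>
    have hsplit := prod_map_eq_prod_filter_mul (f := f) (key · < n)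
      (h.imp fun hxy hx hy => hxy (by omega))
    have hlow := ih (l := l.filter (key · < n))
      (fun x hx => by simpa using (List.mem_filter.1 hx).2) (h.filter _)
    have htop : l.filter (¬key · < n) = l.filter (key · = n) :=
      List.filter_congr fun x hx => by have := hn x hx; simp; omega
    have hblock : ∀ c ∈ List.range n,
        (l.filter (key · < n)).filter (key · = c) = l.filter (key · = c) := by
      intro c hc
      rw [List.filter_filter]
      exact List.filter_congr fun x _ => by have := List.mem_range.1 hc; simp; omega
    rw [hsplit, hlow, htop, List.range_succ, List.map_append, List.prod_append,
      List.map_congr_left fun c hc => by rw [hblock c hc]]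
    simp

end MonoidWords

section SwapProd

variable {α β : Type*} [DecidableEq α]

/-- The product of the transpositions `(x y)` for the pairs `(x, y)` listed in `l`. Words in
transpositions are encoded by their lists of endpoints. -/
def swapProd (l : List (α × α)) : Perm α :=
  (l.map fun e => swap e.1 e.2).prod

@[simp] theorem swapProd_nil : swapProd ([] : List (α × α)) = 1 := rfl

@[simp] theorem swapProd_cons (e : α × α) (l : List (α × α)) :
    swapProd (e :: l) = swap e.1 e.2 * swapProd l := by
  simp [swapProd]

@[simp] theorem swapProd_append (l r : List (α × α)) :
    swapProd (l ++ r) = swapProd l * swapProd r := by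
  simp [swapProd]

theorem swapProd_map_prodMap (σ : Perm α) (l : List (α × α)) :
    swapProd (l.map (Prod.map σ σ)) = σ * swapProd l * σ⁻¹ := by
  induction l with
  | nil => simp
  | cons e l ih => simp [ih, Equiv.swap_apply_apply, mul_assoc]

theorem apply_swapProd_apply {f : α → β} {l : List (α × α)} (hf : ∀ e ∈ l, f e.1 = f e.2) (x : α) :
    f (swapProd l x) = f x := by
  induction l with
  | nil => rfl
  | cons e l ih =>
    rw [List.forall_mem_cons] at hf
    rw [swapProd_cons, Perm.mul_apply, ← ih hf.2, Equiv.swap_apply_def]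
    split_ifs with h₁ h₂
    · rw [h₁, hf.1]
    · rw [h₂, hf.1]
    · rfl

theorem swapProd_apply_mem_iff {s : Set α} {l : List (α × α)}
    (hs : ∀ e ∈ l, e.1 ∈ s ↔ e.2 ∈ s) (x : α) : swapProd l x ∈ s ↔ x ∈ s :=
  (apply_swapProd_apply (f := (· ∈ s)) (fun e he => propext (hs e he)) x).to_iff

theorem swapProd_apply_eq_self {l : List (α × α)} {x : α} (hx : ∀ e ∈ l, e.1 ≠ x ∧ e.2 ≠ x) :
    swapProd l x = x :=
  (swapProd_apply_mem_iff (s := {x}) (fun e he => iff_of_false (hx e he).1 (hx e he).2) x).2 rfl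

theorem swapProd_apply_mem {s : Set α} {l : List (α × α)} (hs : ∀ e ∈ l, e.1 ∈ s ∧ e.2 ∈ s) {x : α}
    (hx : x ∈ s) : swapProd l x ∈ s :=
  (swapProd_apply_mem_iff (fun e he => iff_of_true (hs e he).1 (hs e he).2) x).2 hx

theorem swapProd_apply_eq_self_of_notMem {s : Set α} {l : List (α × α)}
    (hs : ∀ e ∈ l, e.1 ∈ s ∧ e.2 ∈ s) {x : α} (hx : x ∉ s) : swapProd l x = x :=
  swapProd_apply_eq_self fun e he =>
    ⟨ne_of_mem_of_not_mem (hs e he).1 hx, ne_of_mem_of_not_mem (hs e he).2 hx⟩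

end SwapProd

section Contraction

variable {α : Type*}

/-- Contracting the edges one at a time moves at most one new point per edge. -/
theorem exists_edge_invariant_card_support_le (l : List (α × α)) :
    ∃ (f : α → α) (s : Finset α),
      (∀ e ∈ l, f e.1 = f e.2) ∧ (∀ x ∉ s, f x = x) ∧ s.card ≤ l.length := by
  classical
  induction l with
  | nil => exact ⟨id, ∅, by simp, by simp, by simp⟩
  | cons e l ih =>
    obtain ⟨f, s, hf, hs, hcard⟩ := ih
    refine ⟨fun x => if f x = f e.1 then f e.2 else f x, insert (f e.1) s, ?_, ?_, ?_⟩
    · rw [List.forall_mem_cons]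
      exact ⟨by simp, fun g hg => by simp [hf g hg]⟩
    · intro x hx
      rw [Finset.mem_insert, not_or] at hx
      simp [hs x hx.2, hx.1]
    · exact (Finset.card_insert_le _ _).trans (Nat.succ_le_succ hcard)

/-- A connected graph on `s` has at least `s.card - 1` edges; connectedness is expressed by the
absence of nonconstant invariants. -/
theorem card_le_length_add_one {l : List (α × α)} {s : Finset α} {a : α}
    (hs : ∀ f : α → α, (∀ e ∈ l, f e.1 = f e.2) → ∀ x ∈ s, f x = f a) :
    s.card ≤ l.length + 1 := by
  classical
  obtain ⟨f, t, hf, ht, hcard⟩ := exists_edge_invariant_card_support_le l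
  have hsub : s.erase (f a) ⊆ t := by
    intro x hx
    rw [Finset.mem_erase] at hx
    by_contra hxt
    exact hx.1 ((ht x hxt).symm.trans (hs f hf x hx.2))
  have herase := Finset.pred_card_le_card_erase (s := s) (a := f a)
  have hle := Finset.card_le_card hsub
  omega

end Contraction

section IntervalWords

theorem eq_of_forall_succ_eq {β : Type*} {f : ℕ → β} {a b : ℕ}
    (h : ∀ i, a ≤ i → i < b → f (i + 1) = f i) {x : ℕ} (hax : a ≤ x) (hxb : x ≤ b) :
    f x = f a := by
  induction x, hax using Nat.le_induction with
  | base => rfl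
  | succ x hax ih => rw [h x hax hxb, ih (by omega)]

theorem le_add_length_of_apply_eq_succ {l : List (ℕ × ℕ)} {a b : ℕ}
    (h : ∀ i, a ≤ i → i < b → swapProd l i = i + 1) : b ≤ a + l.length := by
  have hcard : (Finset.Icc a b).card ≤ l.length + 1 := by
    refine card_le_length_add_one (a := a) fun f hf x hx => ?_
    rw [Finset.mem_Icc] at hx
    refine eq_of_forall_succ_eq (fun i hai hib => ?_) hx.1 hx.2
    rw [← h i hai hib, apply_swapProd_apply hf]
  rw [Nat.card_Icc] at hcard
  omega

/-- If an edge crossed the cut at `q`, it would connect the intervals `[a, q - 1]` and `[q, b]`,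
leaving too few edges for a connected graph on `[a, b]`. -/
theorem lt_iff_lt_of_apply_eq_succ {l : List (ℕ × ℕ)} {a b q : ℕ}
    (hlen : a + l.length < b) (hq : q ≤ b)
    (h : ∀ i, a ≤ i → i < b → i + 1 ≠ q → swapProd l i = i + 1) {e : ℕ × ℕ} (he : e ∈ l)
    (h₁ : e.1 ∈ Set.Icc a b) (h₂ : e.2 ∈ Set.Icc a b) : e.1 < q ↔ e.2 < q := by
  rw [Set.mem_Icc] at h₁ h₂
  by_contra hcross
  have hcard : (Finset.Icc a b).card ≤ l.length + 1 := by
    refine card_le_length_add_one (a := a) fun f hf x hx => ?_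
    have hsucc : ∀ i, a ≤ i → i < b → i + 1 ≠ q → f (i + 1) = f i := fun i hai hib hiq => by
      rw [← h i hai hib hiq, apply_swapProd_apply hf]
    have hlow : ∀ y, a ≤ y → y < q → f y = f a := fun y hay hyq =>
      eq_of_forall_succ_eq (b := q - 1) (fun i _ _ => hsucc i (by omega) (by omega) (by omega))
        hay (by omega)
    have hhigh : ∀ y, q ≤ y → y ≤ b → f y = f q := fun y hqy hyb =>
      eq_of_forall_succ_eq (b := b) (fun i _ _ => hsucc i (by omega) (by omega) (by omega)) hqy hyb
    have hbridge : f q = f a := by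
      have hfe := hf e he
      rcases lt_or_ge e.1 q with h₁q | h₁q
      · rw [← hlow e.1 h₁.1 h₁q, hfe, hhigh e.2 (by omega) h₂.2]
      · rw [← hhigh e.1 h₁q h₁.2, hfe, hlow e.2 h₂.1 (by omega)]
    rw [Finset.mem_Icc] at hx
    rcases lt_or_ge x q with hxq | hxq
    · exact hlow x hx.1 hxq
    · rw [hhigh x hxq hx.2, hbridge]
  rw [Nat.card_Icc] at hcard
  omega

/-- `l` is a minimal factorization into transpositions of the cycle `(a a+1 … b)` on the interval
`[a, b]`, its transpositions being written with the smaller endpoint first. -/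
structure IsCycleWord (a b : ℕ) (l : List (ℕ × ℕ)) : Prop where
  bounds : ∀ e ∈ l, a ≤ e.1 ∧ e.1 < e.2 ∧ e.2 ≤ b
  add_length : a + l.length = b
  apply_eq : ∀ i, a ≤ i → i < b → swapProd l i = i + 1

end IntervalWords

section TernaryTrees

/-- Rooted plane trees in which every internal node has exactly three children. They index the
commutation classes of minimal factorizations of a cycle. -/
inductive TernaryTree
  | leaf : TernaryTree
  | node (t₁ t₂ t₃ : TernaryTree) : TernaryTree

namespace TernaryTree

/-- The number of internal nodes of a ternary tree; it is the length of the factorizations that the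
tree indexes. -/
def numNodes : TernaryTree → ℕ
  | leaf => 0
  | node t₁ t₂ t₃ => t₁.numNodes + t₂.numNodes + t₃.numNodes + 1

/-- The canonical representative of the commutation class indexed by `t`: a minimal factorization
of the cycle on `[a, a + t.numNodes]`. The root contributes the pair `(a, m)`, and its three
subtrees contribute factorizations of the cycles on `[a, p - 1]`, `[p, m]` and `[m, b]`. -/
def word : TernaryTree → ℕ → List (ℕ × ℕ)
  | leaf, _ => []
  | node t₁ t₂ t₃, a =>
    let p := a + t₁.numNodes + 1
    let m := p + t₂.numNodes
    t₂.word p ++ (a, m) :: (t₁.word a ++ t₃.word m)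

theorem bounds_of_mem_word {t : TernaryTree} {a : ℕ} {e : ℕ × ℕ} (he : e ∈ t.word a) :
    a ≤ e.1 ∧ e.1 < e.2 ∧ e.2 ≤ a + t.numNodes := by
  induction t generalizing a with
  | leaf => simp [word] at he
  | node t₁ t₂ t₃ ih₁ ih₂ ih₃ =>
    simp only [word, List.mem_append, List.mem_cons] at he
    simp only [numNodes]
    rcases he with he | rfl | he | he
    · have := ih₂ he; omega
    · simp only; omega
    · have := ih₁ he; omega
    · have := ih₃ he; omega

theorem length_word (t : TernaryTree) (a : ℕ) : (t.word a).length = t.numNodes := by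
  induction t generalizing a with
  | leaf => rfl
  | node t₁ t₂ t₃ ih₁ ih₂ ih₃ => simp [word, numNodes, ih₁, ih₂, ih₃]; omega

theorem swapProd_word_apply (t : TernaryTree) (a i : ℕ) :
    swapProd (t.word a) i =
      if a ≤ i ∧ i < a + t.numNodes then i + 1 else if i = a + t.numNodes then a else i := by
  induction t generalizing a i with
  | leaf => simp only [word, numNodes, swapProd_nil, Perm.one_apply]; grind
  | node t₁ t₂ t₃ ih₁ ih₂ ih₃ =>
    simp only [word, swapProd_append, swapProd_cons, Perm.mul_apply, ih₁, ih₂, ih₃, numNodes,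
      Equiv.swap_apply_def]
    grind

theorem isCycleWord_word (t : TernaryTree) (a : ℕ) :
    IsCycleWord a (a + t.numNodes) (t.word a) where
  bounds _ he := bounds_of_mem_word he
  add_length := by rw [length_word]
  apply_eq i hai hib := by rw [swapProd_word_apply, if_pos ⟨hai, hib⟩]

theorem exists_mem_word_lt_le {t : TernaryTree} {a x : ℕ} (hax : a < x)
    (hx : x ≤ a + t.numNodes) : ∃ e ∈ t.word a, e.1 < x ∧ x ≤ e.2 := by
  induction t generalizing a with
  | leaf => simp only [numNodes] at hx; omega
  | node t₁ t₂ t₃ _ _ ih₃ =>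
    simp only [numNodes] at hx
    rcases le_or_gt x (a + t₁.numNodes + 1 + t₂.numNodes) with hxm | hmx
    · exact ⟨_, List.mem_append_right _ List.mem_cons_self, hax, hxm⟩
    · obtain ⟨e, he, hex⟩ := ih₃ hmx (by omega)
      exact ⟨e, by simp [word, he], hex⟩

section Node

variable {t₁ t₂ t₃ u₁ u₂ u₃ : TernaryTree} {a : ℕ} {e : ℕ × ℕ}

theorem mem_word_node : e ∈ (node t₁ t₂ t₃).word a ↔
    e ∈ t₂.word (a + t₁.numNodes + 1) ∨ e = (a, a + t₁.numNodes + 1 + t₂.numNodes) ∨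
      e ∈ t₁.word a ∨ e ∈ t₃.word (a + t₁.numNodes + 1 + t₂.numNodes) := by
  simp [word]

theorem mem_word_fst_iff : e ∈ t₁.word a ↔
    e ∈ (node t₁ t₂ t₃).word a ∧ e.2 ≤ a + t₁.numNodes := by
  rw [mem_word_node]
  refine ⟨fun he => ⟨by simp [he], (bounds_of_mem_word he).2.2⟩, ?_⟩
  rintro ⟨he | rfl | he | he, hle⟩
  · have := bounds_of_mem_word he; omega
  · simp only at hle; omega
  · exact he
  · have := bounds_of_mem_word he; omega

theorem mem_word_snd_iff : e ∈ t₂.word (a + t₁.numNodes + 1) ↔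
    e ∈ (node t₁ t₂ t₃).word a ∧
      a + t₁.numNodes + 1 ≤ e.1 ∧ e.2 ≤ a + t₁.numNodes + 1 + t₂.numNodes := by
  rw [mem_word_node]
  refine ⟨fun he => ⟨by simp [he], ?_⟩, ?_⟩
  · have := bounds_of_mem_word he; omega
  rintro ⟨he | rfl | he | he, hle⟩
  · exact he
  · simp only at hle; omega
  · have := bounds_of_mem_word he; omega
  · have := bounds_of_mem_word he; omega

theorem mem_word_thd_iff : e ∈ t₃.word (a + t₁.numNodes + 1 + t₂.numNodes) ↔
    e ∈ (node t₁ t₂ t₃).word a ∧ a + t₁.numNodes + 1 + t₂.numNodes ≤ e.1 := by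
  rw [mem_word_node]
  refine ⟨fun he => ⟨by simp [he], (bounds_of_mem_word he).1⟩, ?_⟩
  rintro ⟨he | rfl | he | he, hle⟩
  · have := bounds_of_mem_word he; omega
  · simp only at hle; omega
  · have := bounds_of_mem_word he; omega
  · exact he

/-- `(a, m)` is the edge at `a` with the largest other endpoint. -/
theorem numNodes_add_numNodes_le
    (h : ∀ e, e ∈ (node t₁ t₂ t₃).word a → e ∈ (node u₁ u₂ u₃).word a) :
    t₁.numNodes + t₂.numNodes ≤ u₁.numNodes + u₂.numNodes := by
  rcases mem_word_node.1 (h _ (mem_word_node.2 (.inr (.inl rfl)))) with he | he | he | he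
  · have := bounds_of_mem_word he; simp only at this; omega
  · rw [Prod.mk.injEq] at he; omega
  · have := bounds_of_mem_word he; simp only at this; omega
  · have := bounds_of_mem_word he; simp only at this; omega

/-- Only the root edge `(a, m)` passes over the cut between `p - 1` and `p`. -/
theorem numNodes_fst_le (h : ∀ e, e ∈ (node u₁ u₂ u₃).word a → e ∈ (node t₁ t₂ t₃).word a)
    (hm : t₁.numNodes + t₂.numNodes = u₁.numNodes + u₂.numNodes) :
    u₁.numNodes ≤ t₁.numNodes := by
  by_contra! hlt
  obtain ⟨e, he, hcut⟩ := exists_mem_word_lt_le (t := u₁) (x := a + t₁.numNodes + 1) (a := a)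
    (by omega) (by omega)
  have hu := bounds_of_mem_word he
  rcases mem_word_node.1 (h e (mem_word_fst_iff.1 he).1) with he | rfl | he | he
  · have := bounds_of_mem_word he; omega
  · simp only at hu; omega
  · have := bounds_of_mem_word he; omega
  · have := bounds_of_mem_word he; omega

end Node

theorem eq_of_mem_word_iff {t u : TernaryTree} {a : ℕ} (h : ∀ e, e ∈ t.word a ↔ e ∈ u.word a) :
    t = u := by
  induction t generalizing u a with
  | leaf =>
    cases u with
    | leaf => rfl
    | node => exact absurd ((h _).2 (mem_word_node.2 (.inr (.inl rfl)))) (by simp [word])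
  | node t₁ t₂ t₃ ih₁ ih₂ ih₃ =>
    cases u with
    | leaf => exact absurd ((h _).1 (mem_word_node.2 (.inr (.inl rfl)))) (by simp [word])
    | node u₁ u₂ u₃ =>
      have hm : t₁.numNodes + t₂.numNodes = u₁.numNodes + u₂.numNodes :=
        (numNodes_add_numNodes_le fun e => (h e).1).antisymm
          (numNodes_add_numNodes_le fun e => (h e).2)
      have h₁ : t₁.numNodes = u₁.numNodes :=
        (numNodes_fst_le (fun e => (h e).1) hm.symm).antisymm
          (numNodes_fst_le (fun e => (h e).2) hm)
      have h₂ : t₂.numNodes = u₂.numNodes := by omega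
      have hfst := ih₁ (u := u₁) (a := a) fun e => by
        rw [mem_word_fst_iff, h, h₁, ← mem_word_fst_iff]
      have hsnd := ih₂ (u := u₂) (a := a + t₁.numNodes + 1) fun e => by
        rw [mem_word_snd_iff (t₃ := t₃), h, h₁, h₂, ← mem_word_snd_iff]
      have hthd := ih₃ (u := u₃) (a := a + t₁.numNodes + 1 + t₂.numNodes) fun e => by
        rw [mem_word_thd_iff, h, h₁, h₂, ← mem_word_thd_iff]
      rw [hfst, hsnd, hthd]

end TernaryTree

end TernaryTrees

section Decomposition

namespace IsCycleWord

theorem exists_eq_append_cons {a b : ℕ} {l : List (ℕ × ℕ)} (hl : IsCycleWord a b l)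
    (hab : a < b) : ∃ L m R, l = L ++ (a, m) :: R ∧ ∀ e ∈ L, a < e.1 := by
  have hex : ∃ e ∈ l, e.1 = a := by
    by_contra! hne
    have hfix := swapProd_apply_eq_self (x := a) fun e he => by
      have := hl.bounds e he; have := hne e he; omega
    rw [hl.apply_eq a le_rfl hab] at hfix
    omega
  obtain ⟨e, hfind⟩ := Option.isSome_iff_exists.1
    (List.find?_isSome (p := fun e : ℕ × ℕ => e.1 = a).2 (by simpa using hex))
  obtain ⟨he, L, R, rfl, hL⟩ := List.find?_eq_some_iff_append.1 hfind
  refine ⟨L, e.2, R, by simp [← of_decide_eq_true he], fun g hg => ?_⟩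
  have hga : g.1 ≠ a := by simpa using hL g hg
  have := (hl.bounds g (by simp [hg])).1
  omega

section Splitting

variable {a b m : ℕ} {L R : List (ℕ × ℕ)} (hl : IsCycleWord a b (L ++ (a, m) :: R))
  (hL : ∀ e ∈ L, a < e.1)

include hl

theorem length_add_length : a + L.length + R.length + 1 = b := by
  rw [← hl.add_length, List.length_append, List.length_cons]
  omega

theorem bounds_mid : a < m ∧ m ≤ b := (hl.bounds (a, m) (by simp)).2

theorem swapProd_left_swap_right_apply {i : ℕ} (hai : a ≤ i) (hib : i < b) :
    swapProd L (swap a m (swapProd R i)) = i + 1 := by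
  simpa using hl.apply_eq i hai hib

/-- Moving `(a m)` to the right end of `L` conjugates the transpositions of `L`. -/
theorem swapProd_map_swap_append_apply {i : ℕ} (hai : a ≤ i) (hib : i < b) (him : i + 1 ≠ m) :
    swapProd (L.map (Prod.map (swap a m) (swap a m)) ++ R) i = i + 1 := by
  rw [swapProd_append, swapProd_map_prodMap, Equiv.swap_inv, Perm.mul_apply, Perm.mul_apply,
    Perm.mul_apply, hl.swapProd_left_swap_right_apply hai hib]
  exact Equiv.swap_apply_of_ne_of_ne (by omega) him

theorem right_not_across {e : ℕ × ℕ} (he : e ∈ R) : e.2 < m ∨ m ≤ e.1 := by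
  have hlen := hl.length_add_length
  have hb := hl.bounds e (by simp [he])
  have hcut := lt_iff_lt_of_apply_eq_succ (a := a) (b := b) (by simp; omega) hl.bounds_mid.2
    (fun _ => hl.swapProd_map_swap_append_apply) (List.mem_append_right _ he)
    ⟨by omega, by omega⟩ ⟨by omega, by omega⟩
  omega

include hL

theorem left_not_across {e : ℕ × ℕ} (he : e ∈ L) : e.2 ≤ m ∨ m < e.1 := by
  have hlen := hl.length_add_length
  have hm := hl.bounds_mid
  have hb := hl.bounds e (by simp [he])
  have ha := hL e he
  have hIcc : ∀ x ∈ Set.Icc a b, swap a m x ∈ Set.Icc a b := fun x hx => by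
    rw [Set.mem_Icc] at *
    rw [Equiv.swap_apply_def]
    split_ifs <;> omega
  have hcut := lt_iff_lt_of_apply_eq_succ (a := a) (b := b) (by simp; omega) hm.2
    (fun _ => hl.swapProd_map_swap_append_apply)
    (List.mem_append_left _ (List.mem_map_of_mem he))
    (hIcc _ ⟨by omega, by omega⟩) (hIcc _ ⟨by omega, by omega⟩)
  simp only [Prod.map_fst, Prod.map_snd, Equiv.swap_apply_def] at hcut
  split_ifs at hcut <;> omega

theorem swapProd_left_apply_self : swapProd L a = a :=
  swapProd_apply_eq_self fun e he => by
    have := hL e he; have := hl.bounds e (by simp [he]); omega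

theorem bounds_swapProd_left_apply : a < swapProd L m ∧ swapProd L m ≤ b :=
  (swapProd_apply_mem_iff (s := Set.Ioc a b) (fun e he => by
    have := hL e he; have := hl.bounds e (by simp [he]); simp only [Set.mem_Ioc]; omega) m).2
    hl.bounds_mid

/-- Moving `(a m)` to the left end of the word turns it into `(a p)`, with `p = swapProd L m`. -/
theorem swapProd_append_apply {i : ℕ} (hai : a ≤ i) (hib : i < b) (hip : i + 1 ≠ swapProd L m) :
    swapProd (L ++ R) i = i + 1 := by
  have h := hl.swapProd_left_swap_right_apply hai hib
  rw [Equiv.swap_apply_def] at h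
  split_ifs at h with h₁ h₂
  · exact absurd h.symm hip
  · rw [hl.swapProd_left_apply_self hL] at h
    omega
  · simpa using h

theorem not_across {e : ℕ × ℕ} (he : e ∈ L ++ R) :
    e.2 < swapProd L m ∨ swapProd L m ≤ e.1 := by
  have hlen := hl.length_add_length
  have hb : a ≤ e.1 ∧ e.1 < e.2 ∧ e.2 ≤ b :=
    hl.bounds e (by rw [List.mem_append] at he; simp; tauto)
  have hcut := lt_iff_lt_of_apply_eq_succ (a := a) (b := b) (by simp; omega)
    (hl.bounds_swapProd_left_apply hL).2 (fun _ => hl.swapProd_append_apply hL) he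
    ⟨by omega, by omega⟩ ⟨by omega, by omega⟩
  omega

theorem swapProd_left_apply_le : swapProd L m ≤ m := by
  by_contra! hlt
  have hmem := (swapProd_apply_mem_iff (l := L) (s := Set.Iio (swapProd L m)) (fun e he => by
    have := hl.not_across hL (List.mem_append_left R he)
    have := hl.bounds e (by simp [he])
    simp only [Set.mem_Iio]; omega) m).2 hlt
  exact lt_irrefl _ (Set.mem_Iio.1 hmem)

end Splitting

end IsCycleWord

theorem apply_eq_succ_of_blocks {a b p m : ℕ} {A B C : List (ℕ × ℕ)}
    (h : ∀ i, a ≤ i → i < b → swapProd B (swap a m (swapProd A (swapProd C i))) = i + 1)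
    (hap : a < p) (hpm : p ≤ m) (hmb : m ≤ b)
    (hA : ∀ e ∈ A, e.1 ∈ Set.Iio p ∧ e.2 ∈ Set.Iio p)
    (hB : ∀ e ∈ B, e.1 ∈ Set.Icc p m ∧ e.2 ∈ Set.Icc p m)
    (hC : ∀ e ∈ C, e.1 ∈ Set.Ici m ∧ e.2 ∈ Set.Ici m) :
    (∀ i, a ≤ i → i < p - 1 → swapProd A i = i + 1) ∧
      (∀ i, p ≤ i → i < m → swapProd B i = i + 1) ∧
      ∀ i, m ≤ i → i < b → swapProd C i = i + 1 := by
  have fixA : ∀ i, p ≤ i → swapProd A i = i := fun i hi =>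
    swapProd_apply_eq_self_of_notMem hA (by simpa using hi)
  have fixB : ∀ i, i < p ∨ m < i → swapProd B i = i := fun i hi =>
    swapProd_apply_eq_self_of_notMem hB (by rw [Set.mem_Icc]; omega)
  have fixC : ∀ i, i < m → swapProd C i = i := fun i hi =>
    swapProd_apply_eq_self_of_notMem hC (by simpa using hi)
  refine ⟨fun i hai hip => ?_, fun i hpi him => ?_, fun i hmi hib => ?_⟩
  · have hi := h i hai (by omega)
    have hlt : swapProd A i < p := swapProd_apply_mem hA (Set.mem_Iio.2 (by omega))
    have hge : p ≤ swapProd B m := (swapProd_apply_mem hB (Set.mem_Icc.2 ⟨hpm, le_rfl⟩)).1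
    rw [fixC i (by omega), Equiv.swap_apply_def] at hi
    split_ifs at hi with hia him
    · omega
    · omega
    · rwa [fixB _ (.inl hlt)] at hi
  · have hi := h i (by omega) (by omega)
    rwa [fixC i him, fixA i hpi, Equiv.swap_apply_of_ne_of_ne (by omega) (by omega)] at hi
  · have hi := h i (by omega) hib
    have hge : m ≤ swapProd C i := swapProd_apply_mem hC (Set.mem_Ici.2 hmi)
    rw [fixA _ (by omega), Equiv.swap_apply_def] at hi
    split_ifs at hi with hia him
    · omega
    · rw [fixB a (.inl hap)] at hi
      omega
    · rwa [fixB _ (.inr (by omega))] at hi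

/-- The position in `TernaryTree.word` of the part to which an edge belongs: `0` for the edges in
`[p, m]`, `1` for `(a, m)`, `2` for the edges below `p` and `3` for the remaining ones. -/
def blockIndex (a p m : ℕ) (e : ℕ × ℕ) : ℕ :=
  if p ≤ e.1 ∧ e.2 ≤ m then 0 else if e = (a, m) then 1 else if e.2 < p then 2 else 3

theorem blockIndex_lt_four (a p m : ℕ) (e : ℕ × ℕ) : blockIndex a p m e < 4 := by
  unfold blockIndex
  split_ifs <;> omega

namespace IsCycleWord

section Blocks

variable {a b m : ℕ} {L R : List (ℕ × ℕ)} (hl : IsCycleWord a b (L ++ (a, m) :: R))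
  (hL : ∀ e ∈ L, a < e.1)

include hl hL

theorem blockIndex_left {e : ℕ × ℕ} (he : e ∈ L) :
    blockIndex a (swapProd L m) m e = 0 ∧ swapProd L m ≤ e.1 ∧ e.2 ≤ m ∨
    blockIndex a (swapProd L m) m e = 2 ∧ a < e.1 ∧ e.2 < swapProd L m ∨
    blockIndex a (swapProd L m) m e = 3 ∧ m < e.1 := by
  have ha := hL e he
  have hb := hl.bounds e (by simp [he])
  have hm := hl.left_not_across hL he
  have hp := hl.not_across hL (List.mem_append_left R he)
  have hne : e ≠ (a, m) := by rintro rfl; exact lt_irrefl _ ha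
  simp only [blockIndex, hne, if_false]
  split_ifs <;> omega

theorem blockIndex_right {e : ℕ × ℕ} (he : e ∈ R) :
    blockIndex a (swapProd L m) m e = 0 ∧ swapProd L m ≤ e.1 ∧ e.2 < m ∨
    blockIndex a (swapProd L m) m e = 2 ∧ a ≤ e.1 ∧ e.2 < swapProd L m ∨
    blockIndex a (swapProd L m) m e = 3 ∧ m ≤ e.1 := by
  have hb := hl.bounds e (by simp [he])
  have hm := hl.right_not_across he
  have hp := hl.not_across hL (List.mem_append_right L he)
  have hpm := hl.swapProd_left_apply_le hL
  have ham := hl.bounds_mid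
  have hne : e ≠ (a, m) := by rintro rfl; simp only at hm; omega
  simp only [blockIndex, hne, if_false]
  split_ifs <;> omega

theorem blockIndex_mid : blockIndex a (swapProd L m) m (a, m) = 1 := by
  have := hl.bounds_swapProd_left_apply hL
  rw [blockIndex, if_neg (by simp only; omega), if_pos rfl]

theorem bounds_of_blockIndex {e : ℕ × ℕ} (he : e ∈ L ++ (a, m) :: R) :
    blockIndex a (swapProd L m) m e = 0 ∧ swapProd L m ≤ e.1 ∧ e.2 ≤ m ∨
    blockIndex a (swapProd L m) m e = 1 ∨
    blockIndex a (swapProd L m) m e = 2 ∧ e.2 < swapProd L m ∨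
    blockIndex a (swapProd L m) m e = 3 ∧ m ≤ e.1 := by
  rw [List.mem_append, List.mem_cons] at he
  rcases he with he | rfl | he
  · have := hl.blockIndex_left hL he; omega
  · exact .inr (.inl (hl.blockIndex_mid hL))
  · have := hl.blockIndex_right hL he; omega

theorem filter_blockIndex_eq_one :
    (L ++ (a, m) :: R).filter (blockIndex a (swapProd L m) m · = 1) = [(a, m)] := by
  have hleft : L.filter (blockIndex a (swapProd L m) m · = 1) = [] :=
    List.filter_eq_nil_iff.2 fun e he => by have := hl.blockIndex_left hL he; simp; omega
  have hright : R.filter (blockIndex a (swapProd L m) m · = 1) = [] :=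
    List.filter_eq_nil_iff.2 fun e he => by have := hl.blockIndex_right hL he; simp; omega
  simp [List.filter_append, hleft, hright, hl.blockIndex_mid hL]

theorem pairwise_nodup_of_blockIndex_lt : (L ++ (a, m) :: R).Pairwise fun e g =>
    blockIndex a (swapProd L m) m g < blockIndex a (swapProd L m) m e →
      [e.1, e.2, g.1, g.2].Nodup := by
  have hmid := hl.blockIndex_mid hL
  have ham := hl.bounds_mid
  have hap := hl.bounds_swapProd_left_apply hL
  have hpm := hl.swapProd_left_apply_le hL
  have hleft : ∀ e ∈ L, (a < e.1 ∧ e.1 < e.2 ∧ e.2 ≤ b) ∧ _ := fun e he =>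
    ⟨⟨hL e he, (hl.bounds e (by simp [he])).2⟩, hl.blockIndex_left hL he⟩
  have hright : ∀ e ∈ R, (a ≤ e.1 ∧ e.1 < e.2 ∧ e.2 ≤ b) ∧ _ := fun e he =>
    ⟨hl.bounds e (by simp [he]), hl.blockIndex_right hL he⟩
  rw [List.pairwise_append, List.pairwise_cons]
  refine ⟨List.pairwise_of_forall_mem_list fun e he g hg hlt => ?_,
    ⟨fun g hg hlt => ?_, List.pairwise_of_forall_mem_list fun e he g hg hlt => ?_⟩,
    fun e he => List.forall_mem_cons.2 ⟨fun hlt => ?_, fun g hg hlt => ?_⟩⟩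
  · have := hleft e he; have := hleft g hg; simp; omega
  · have := hright g hg; simp; omega
  · have := hright e he; have := hright g hg; simp; omega
  · have := hleft e he; simp; omega
  · have := hleft e he; have := hright g hg; simp; omega

theorem prod_map_eq_prod_blocks {M : Type*} [Monoid M] {f : ℕ × ℕ → M}
    (hf : ∀ e ∈ L ++ (a, m) :: R, ∀ g ∈ L ++ (a, m) :: R,
      [e.1, e.2, g.1, g.2].Nodup → Commute (f e) (f g)) :
    let block c := (L ++ (a, m) :: R).filter (blockIndex a (swapProd L m) m · = c)
    ((L ++ (a, m) :: R).map f).prod =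
      ((block 0 ++ (a, m) :: (block 2 ++ block 3)).map f).prod := by
  intro block
  have hcomm := (hl.pairwise_nodup_of_blockIndex_lt hL).imp_of_mem
    (S := fun e g => blockIndex a (swapProd L m) m g < blockIndex a (swapProd L m) m e →
      Commute (f e) (f g))
    fun {e g} he hg hnodup hlt => hf e he g hg (hnodup hlt)
  rw [prod_map_eq_prod_range_filter _ (fun e _ => blockIndex_lt_four a (swapProd L m) m e) hcomm]
  change ((List.range 4).map fun c => ((block c).map f).prod).prod = _
  have hblock : block 1 = [(a, m)] := hl.filter_blockIndex_eq_one hL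
  simp [List.range_succ, hblock]

theorem isCycleWord_blocks :
    let block c := (L ++ (a, m) :: R).filter (blockIndex a (swapProd L m) m · = c)
    IsCycleWord a b (block 0 ++ (a, m) :: (block 2 ++ block 3)) where
  bounds e he := hl.bounds e <| by
    simp only [List.mem_append, List.mem_cons, List.mem_filter] at he ⊢
    tauto
  add_length := by
    have hlen := hl.prod_map_eq_prod_blocks hL (f := fun _ => Multiplicative.ofAdd 1)
      fun _ _ _ _ _ => Commute.all _ _
    simp only [List.map_const', List.prod_replicate, ← ofAdd_nsmul, smul_eq_mul, mul_one,
      Multiplicative.ofAdd.injective.eq_iff] at hlen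
    rw [← hlen, hl.add_length]
  apply_eq i hai hib := by
    have hprod : swapProd _ = swapProd _ := hl.prod_map_eq_prod_blocks hL
      fun _ _ _ _ hnodup => (Perm.disjoint_swap_swap hnodup).commute
    rw [← hprod, hl.apply_eq i hai hib]

end Blocks

theorem of_blocks {a b p m : ℕ} {A B C : List (ℕ × ℕ)}
    (h : IsCycleWord a b (B ++ (a, m) :: (A ++ C))) (hap : a < p) (hpm : p ≤ m)
    (hA : ∀ e ∈ A, e.2 < p) (hB : ∀ e ∈ B, p ≤ e.1 ∧ e.2 ≤ m) (hC : ∀ e ∈ C, m ≤ e.1) :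
    IsCycleWord a (p - 1) A ∧ IsCycleWord p m B ∧ IsCycleWord m b C := by
  have boundsA : ∀ e ∈ A, a ≤ e.1 ∧ e.1 < e.2 := fun e he => by
    have := h.bounds e (by simp [he]); omega
  have boundsB : ∀ e ∈ B, e.1 < e.2 := fun e he => (h.bounds e (by simp [he])).2.1
  have boundsC : ∀ e ∈ C, e.1 < e.2 ∧ e.2 ≤ b := fun e he => (h.bounds e (by simp [he])).2
  obtain ⟨applyA, applyB, applyC⟩ := apply_eq_succ_of_blocks (A := A) (B := B) (C := C)
    (fun i hai hib => by simpa using h.apply_eq i hai hib) hap hpm (h.bounds (a, m) (by simp)).2.2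
    (fun e he => by have := boundsA e he; have := hA e he; simp only [Set.mem_Iio]; omega)
    (fun e he => by have := boundsB e he; have := hB e he; simp only [Set.mem_Icc]; omega)
    (fun e he => by have := boundsC e he; have := hC e he; simp only [Set.mem_Ici]; omega)
  have hlen := h.add_length
  have lengthA := le_add_length_of_apply_eq_succ applyA
  have lengthB := le_add_length_of_apply_eq_succ applyB
  have lengthC := le_add_length_of_apply_eq_succ applyC
  simp only [List.length_append, List.length_cons] at hlen
  refine ⟨⟨fun e he => ?_, by omega, applyA⟩, ⟨fun e he => ?_, by omega, applyB⟩,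
    ⟨fun e he => ?_, by omega, applyC⟩⟩
  · have := hA e he; have := boundsA e he; omega
  · have := hB e he; have := boundsB e he; omega
  · have := hC e he; have := boundsC e he; omega

theorem exists_prod_map_eq_blocks {M : Type*} [Monoid M] {f : ℕ × ℕ → M} {a b : ℕ}
    {l : List (ℕ × ℕ)} (hl : IsCycleWord a b l) (hab : a < b)
    (hf : ∀ e ∈ l, ∀ g ∈ l, [e.1, e.2, g.1, g.2].Nodup → Commute (f e) (f g)) :
    ∃ p m A B C, a < p ∧ (A ⊆ l ∧ B ⊆ l ∧ C ⊆ l) ∧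
      IsCycleWord a (p - 1) A ∧ IsCycleWord p m B ∧ IsCycleWord m b C ∧
      (l.map f).prod = ((B ++ (a, m) :: (A ++ C)).map f).prod := by
  obtain ⟨L, m, R, rfl, hL⟩ := hl.exists_eq_append_cons hab
  let block c := (L ++ (a, m) :: R).filter (blockIndex a (swapProd L m) m · = c)
  have hap := (hl.bounds_swapProd_left_apply hL).1
  have hblock : ∀ c, ∀ e ∈ block c, blockIndex a (swapProd L m) m e = c := fun c e he =>
    of_decide_eq_true (List.mem_filter.1 he).2
  have hbounds : ∀ c, ∀ e ∈ block c, _ := fun c e he =>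
    hl.bounds_of_blockIndex hL (List.mem_filter.1 he).1
  obtain ⟨hA, hB, hC⟩ := (hl.isCycleWord_blocks hL).of_blocks hap (hl.swapProd_left_apply_le hL)
    (fun e he => by have := hbounds 2 e he; have := hblock 2 e he; omega)
    (fun e he => by have := hbounds 0 e he; have := hblock 0 e he; omega)
    (fun e he => by have := hbounds 3 e he; have := hblock 3 e he; omega)
  exact ⟨swapProd L m, m, block 2, block 0, block 3, hap,
    ⟨List.filter_subset_self _, List.filter_subset_self _, List.filter_subset_self _⟩,
    hA, hB, hC, hl.prod_map_eq_prod_blocks hL hf⟩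

theorem exists_numNodes_prod_map_eq {M : Type*} [Monoid M] {f : ℕ × ℕ → M} {a b : ℕ}
    {l : List (ℕ × ℕ)} (hl : IsCycleWord a b l)
    (hf : ∀ e ∈ l, ∀ g ∈ l, [e.1, e.2, g.1, g.2].Nodup → Commute (f e) (f g)) :
    ∃ t : TernaryTree, a + t.numNodes = b ∧ (l.map f).prod = ((t.word a).map f).prod := by
  induction hn : l.length using Nat.strong_induction_on generalizing a b l with
  | _ n ih =>
  have hlen := hl.add_length
  rcases Nat.eq_zero_or_pos n with rfl | hpos
  · obtain rfl := List.length_eq_zero_iff.1 hn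
    exact ⟨.leaf, hlen, rfl⟩
  obtain ⟨p, m, A, B, C, hap, ⟨hAl, hBl, hCl⟩, hA, hB, hC, hprod⟩ :=
    hl.exists_prod_map_eq_blocks (by omega) hf
  have lengthA := hA.add_length
  have lengthB := hB.add_length
  have lengthC := hC.add_length
  obtain ⟨t₁, hn₁, ht₁⟩ :=
    ih _ (by omega) hA (fun e he g hg => hf e (hAl he) g (hAl hg)) rfl
  obtain ⟨t₂, hn₂, ht₂⟩ :=
    ih _ (by omega) hB (fun e he g hg => hf e (hBl he) g (hBl hg)) rfl
  obtain ⟨t₃, hn₃, ht₃⟩ :=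
    ih _ (by omega) hC (fun e he g hg => hf e (hCl he) g (hCl hg)) rfl
  refine ⟨.node t₁ t₂ t₃, by simp only [TernaryTree.numNodes]; omega, ?_⟩
  have hp : a + t₁.numNodes + 1 = p := by omega
  rw [hprod]
  simp only [TernaryTree.word, hp, hn₂, List.map_append, List.map_cons, List.prod_append,
    List.prod_cons, ht₁, ht₂, ht₃]

end IsCycleWord

end Decomposition

section CommutationClasses

variable {n : ℕ} {l l' r r' : List (Perm (Fin n))}

namespace FactEquiv

theorem symm (h : FactEquiv l r) : FactEquiv r l := by
  induction h with
  | refl l => exact .refl l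
  | swap l₁ l₂ σ τ hcomm => exact .swap l₁ l₂ τ σ hcomm.symm
  | trans _ _ ih₁ ih₂ => exact ih₂.trans ih₁

theorem append_left (s : List (Perm (Fin n))) (h : FactEquiv l r) :
    FactEquiv (s ++ l) (s ++ r) := by
  induction h with
  | refl l => exact .refl _
  | swap l₁ l₂ σ τ hcomm => simpa using FactEquiv.swap (s ++ l₁) l₂ σ τ hcomm
  | trans _ _ ih₁ ih₂ => exact ih₁.trans ih₂

theorem append_right (s : List (Perm (Fin n))) (h : FactEquiv l r) :
    FactEquiv (l ++ s) (r ++ s) := by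
  induction h with
  | refl l => exact .refl _
  | swap l₁ l₂ σ τ hcomm => simpa using FactEquiv.swap l₁ (l₂ ++ s) σ τ hcomm
  | trans _ _ ih₁ ih₂ => exact ih₁.trans ih₂

theorem append (h : FactEquiv l r) (h' : FactEquiv l' r') : FactEquiv (l ++ l') (r ++ r') :=
  (h.append_right l').trans (h'.append_left r)

theorem perm (h : FactEquiv l r) : l.Perm r := by
  induction h with
  | refl l => exact .refl l
  | swap l₁ l₂ σ τ => exact .append_left l₁ (.swap τ σ l₂)
  | trans _ _ ih₁ ih₂ => exact ih₁.trans ih₂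

end FactEquiv

theorem equivalence_factEquiv (n : ℕ) : Equivalence (FactEquiv (n := n)) :=
  ⟨.refl, .symm, .trans⟩

/-- `FactEquiv` as a congruence on words; its quotient is the monoid of commutation classes. -/
def factCon (n : ℕ) : Con (FreeMonoid (Perm (Fin n))) where
  r x y := FactEquiv x.toList y.toList
  iseqv := (equivalence_factEquiv n).comap FreeMonoid.toList
  mul' := FactEquiv.append

/-- The commutation class of a one-letter word. -/
def commClass (σ : Perm (Fin n)) : (factCon n).Quotient :=
  (factCon n).mk' (FreeMonoid.of σ)

theorem prod_map_commClass (l : List (Perm (Fin n))) :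
    (l.map commClass).prod = (factCon n).mk' (FreeMonoid.ofList l) := by
  induction l with
  | nil => rfl
  | cons σ l ih => rw [List.map_cons, List.prod_cons, ih, FreeMonoid.ofList_cons, map_mul]; rfl

theorem prod_map_commClass_eq_iff :
    (l.map commClass).prod = (r.map commClass).prod ↔ FactEquiv l r := by
  rw [prod_map_commClass, prod_map_commClass]
  exact Con.eq _

theorem commute_commClass {σ τ : Perm (Fin n)} (h : Commute σ τ) :
    Commute (commClass σ) (commClass τ) := by
  simpa [commute_iff_eq] using prod_map_commClass_eq_iff.2 (FactEquiv.swap [] [] σ τ h)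

end CommutationClasses

section FinWords

variable {k : ℕ}

/-- The transposition of `Fin (k + 1)` encoded by a pair of numbers at most `k`. -/
def finSwap (k : ℕ) (e : ℕ × ℕ) : Perm (Fin (k + 1)) :=
  swap (Fin.ofNat (k + 1) e.1) (Fin.ofNat (k + 1) e.2)

theorem val_finSwap_apply {e : ℕ × ℕ} (h₁ : e.1 ≤ k) (h₂ : e.2 ≤ k) (i : Fin (k + 1)) :
    (finSwap k e i : ℕ) = swap e.1 e.2 i := by
  rw [finSwap, Fin.val_injective.map_swap, Fin.val_ofNat, Fin.val_ofNat,
    Nat.mod_eq_of_lt (by omega), Nat.mod_eq_of_lt (by omega)]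

theorem val_prod_map_finSwap_apply {l : List (ℕ × ℕ)} (hl : ∀ e ∈ l, e.1 ≤ k ∧ e.2 ≤ k)
    (i : Fin (k + 1)) : ((l.map (finSwap k)).prod i : ℕ) = swapProd l i := by
  induction l with
  | nil => rfl
  | cons e l ih =>
    rw [List.forall_mem_cons] at hl
    rw [List.map_cons, List.prod_cons, Perm.mul_apply, val_finSwap_apply hl.1.1 hl.1.2, ih hl.2,
      swapProd_cons, Perm.mul_apply]

theorem commute_finSwap {e g : ℕ × ℕ} (he : e.1 ≤ k ∧ e.2 ≤ k) (hg : g.1 ≤ k ∧ g.2 ≤ k)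
    (h : [e.1, e.2, g.1, g.2].Nodup) : Commute (finSwap k e) (finSwap k g) := by
  refine (Perm.disjoint_swap_swap (h.map_on (f := Fin.ofNat (k + 1)) ?_)).commute
  have hval : ∀ x ∈ [e.1, e.2, g.1, g.2], (Fin.ofNat (k + 1) x : ℕ) = x := fun x hx =>
    Nat.mod_eq_of_lt (by simp at hx; omega)
  intro x hx y hy hxy
  rw [← hval x hx, hxy, hval y hy]

theorem injOn_finSwap (k : ℕ) : Set.InjOn (finSwap k) {e | e.1 < e.2 ∧ e.2 ≤ k} := by
  rintro e ⟨he, hek⟩ g ⟨hg, hgk⟩ h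
  have hswap : ∀ x, x ≤ k → swap e.1 e.2 x = swap g.1 g.2 x := fun x hx => by
    rw [← val_finSwap_apply (k := k) (by omega) hek ⟨x, by omega⟩, h,
      val_finSwap_apply (by omega) hgk]
  have h₁ := hswap e.1 (by omega)
  have h₂ := hswap e.2 hek
  rw [Equiv.swap_apply_left, Equiv.swap_apply_def] at h₁
  rw [Equiv.swap_apply_right, Equiv.swap_apply_def] at h₂
  ext <;> grind

theorem isSwap_iff_exists_finSwap_eq {σ : Perm (Fin (k + 1))} :
    σ.IsSwap ↔ ∃ e : ℕ × ℕ, (e.1 < e.2 ∧ e.2 ≤ k) ∧ finSwap k e = σ := by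
  constructor
  · rintro ⟨x, y, hxy, rfl⟩
    rcases lt_or_gt_of_ne hxy with hlt | hlt
    · exact ⟨(x, y), ⟨hlt, by simp only; omega⟩, by simp [finSwap]⟩
    · exact ⟨(y, x), ⟨hlt, by simp only; omega⟩, by simp [finSwap, Equiv.swap_comm x y]⟩
  · rintro ⟨e, ⟨hlt, hle⟩, rfl⟩
    refine ⟨_, _, fun heq => hlt.ne ?_, rfl⟩
    have hval := congrArg Fin.val heq
    rwa [Fin.val_ofNat, Fin.val_ofNat, Nat.mod_eq_of_lt (by omega),
      Nat.mod_eq_of_lt (by omega)] at hval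

theorem exists_map_finSwap_eq {l : List (Perm (Fin (k + 1)))} (hl : ∀ σ ∈ l, σ.IsSwap) :
    ∃ q : List (ℕ × ℕ), (∀ e ∈ q, e.1 < e.2 ∧ e.2 ≤ k) ∧ q.map (finSwap k) = l := by
  choose! g hg using fun σ : Perm (Fin (k + 1)) => (isSwap_iff_exists_finSwap_eq (σ := σ)).1
  refine ⟨l.map g, fun e he => ?_, ?_⟩
  · obtain ⟨σ, hσ, rfl⟩ := List.mem_map.1 he
    exact (hg σ (hl σ hσ)).1
  · rw [List.map_map]
    exact List.map_congr_left (fun σ hσ => (hg σ (hl σ hσ)).2) |>.trans (List.map_id l)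

theorem mem_iff_of_factEquiv {l r : List (ℕ × ℕ)} (hl : ∀ e ∈ l, e.1 < e.2 ∧ e.2 ≤ k)
    (hr : ∀ e ∈ r, e.1 < e.2 ∧ e.2 ≤ k)
    (h : FactEquiv (l.map (finSwap k)) (r.map (finSwap k))) (e : ℕ × ℕ) : e ∈ l ↔ e ∈ r := by
  have himage : finSwap k '' {e | e ∈ l} = finSwap k '' {e | e ∈ r} := by
    ext σ
    simpa using h.perm.mem_iff (a := σ)
  exact Set.ext_iff.1 (((injOn_finSwap k).image_eq_image_iff hl hr).1 himage) e

namespace IsCycleWord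

theorem apply_right {a b : ℕ} {l : List (ℕ × ℕ)} (hl : IsCycleWord a b l) : swapProd l b = a := by
  have hab := hl.add_length
  have hmem : swapProd l b ∈ Set.Icc a b :=
    swapProd_apply_mem (fun e he => by
      have := hl.bounds e he; simp only [Set.mem_Icc]; omega) (by rw [Set.mem_Icc]; omega)
  rw [Set.mem_Icc] at hmem
  by_contra hne
  have hpred := hl.apply_eq (swapProd l b - 1) (by omega) (by omega)
  rw [Nat.sub_add_cancel (by omega)] at hpred
  have := (swapProd l).injective hpred
  omega

theorem prod_map_finSwap {l : List (ℕ × ℕ)} (hl : IsCycleWord 0 k l) :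
    (l.map (finSwap k)).prod = finRotate (k + 1) := by
  ext i
  rw [val_prod_map_finSwap_apply (fun e he => by have := hl.bounds e he; omega), coe_finRotate]
  split_ifs with hi
  · rw [hi, Fin.val_last, hl.apply_right]
  · exact hl.apply_eq i (Nat.zero_le _) (Fin.val_lt_last hi)

/-- The factorization of `finRotate (k + 1)` encoded by a word. -/
def toTransFact {l : List (ℕ × ℕ)} (hl : IsCycleWord 0 k l) : TransFact (k + 1) :=
  ⟨l.map (finSwap k), by have := hl.add_length; simp; omega,
    List.forall_mem_map.2 fun e he =>
      isSwap_iff_exists_finSwap_eq.2 ⟨e, (hl.bounds e he).2, rfl⟩,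
    hl.prod_map_finSwap⟩

end IsCycleWord

theorem exists_toTransFact_eq (F : TransFact (k + 1)) :
    ∃ (l : List (ℕ × ℕ)) (hl : IsCycleWord 0 k l), hl.toTransFact = F := by
  obtain ⟨l, hlen, hswap, hprod⟩ := F
  obtain ⟨q, hq, rfl⟩ := exists_map_finSwap_eq hswap
  refine ⟨q, ⟨fun e he => by have := hq e he; omega, by simpa using hlen, fun i _ hi => ?_⟩, rfl⟩
  have hval := val_prod_map_finSwap_apply (k := k) (l := q)
    (fun e he => by have := hq e he; omega) ⟨i, by omega⟩
  rw [← hval, hprod, coe_finRotate_of_ne_last (by simp [Fin.ext_iff]; omega)]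

theorem IsCycleWord.exists_factEquiv_word {l : List (ℕ × ℕ)} (hl : IsCycleWord 0 k l) :
    ∃ t : TernaryTree, t.numNodes = k ∧
      FactEquiv ((t.word 0).map (finSwap k)) (l.map (finSwap k)) := by
  obtain ⟨t, ht, hprod⟩ := hl.exists_numNodes_prod_map_eq (f := commClass ∘ finSwap k)
    fun e he g hg hnodup => commute_commClass <| commute_finSwap
      (by have := hl.bounds e he; omega) (by have := hl.bounds g hg; omega) hnodup
  refine ⟨t, by omega, prod_map_commClass_eq_iff.1 ?_⟩
  rw [List.map_map, List.map_map, hprod]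

theorem isCycleWord_word_zero (t : {t : TernaryTree // t.numNodes = k}) :
    IsCycleWord 0 k (t.1.word 0) := by
  simpa [t.2] using t.1.isCycleWord_word 0

theorem T_succ (k : ℕ) : T (k + 1) = Nat.card {t : TernaryTree // t.numNodes = k} := by
  have hequiv : Equivalence fun F G : TransFact (k + 1) => FactEquiv F.1 G.1 :=
    (equivalence_factEquiv (k + 1)).comap Subtype.val
  refine (Nat.card_eq_of_bijective (fun t => Quot.mk _ (isCycleWord_word_zero t).toTransFact)
    ⟨fun t u htu => ?_, fun F => ?_⟩).symm
  · exact Subtype.ext <| TernaryTree.eq_of_mem_word_iff <| mem_iff_of_factEquiv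
      (fun e he => ((isCycleWord_word_zero t).bounds e he).2)
      (fun e he => ((isCycleWord_word_zero u).bounds e he).2)
      ((hequiv.quot_mk_eq_iff _ _).1 htu)
  · obtain ⟨F, rfl⟩ := Quot.exists_rep F
    obtain ⟨l, hl, rfl⟩ := exists_toTransFact_eq F
    obtain ⟨t, ht, hcomm⟩ := hl.exists_factEquiv_word
    exact ⟨⟨t, ht⟩, Quot.sound hcomm⟩

end FinWords

section Counting

variable {α β R : Type*} [Semiring R]

/-- The ordinary generating function of a weight function `w` on a class of combinatorial objects;
a coefficient is `0` when there are infinitely many objects of its weight. -/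
noncomputable def weightSeries (R : Type*) [Semiring R] (w : α → ℕ) : PowerSeries R :=
  PowerSeries.mk fun n => (Nat.card {x // w x = n} : R)

theorem coeff_weightSeries (w : α → ℕ) (n : ℕ) :
    PowerSeries.coeff n (weightSeries R w) = Nat.card {x // w x = n} :=
  PowerSeries.coeff_mk n _

/-- A pair of total weight `n` amounts to a splitting of `n` and an object of each weight. -/
def fiberAddEquiv (w : α → ℕ) (v : β → ℕ) (n : ℕ) : {z : α × β // w z.1 + v z.2 = n} ≃
    (ij : antidiagonal n) × ({x // w x = ij.1.1} × {y // v y = ij.1.2}) where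
  toFun z :=
    ⟨⟨(w z.1.1, v z.1.2), mem_antidiagonal.2 z.2⟩, ⟨z.1.1, rfl⟩, ⟨z.1.2, rfl⟩⟩
  invFun s := ⟨(s.2.1.1, s.2.2.1), by rw [s.2.1.2, s.2.2.2, mem_antidiagonal.1 s.1.2]⟩
  right_inv := by
    rintro ⟨⟨⟨i, j⟩, hij⟩, ⟨x, hx⟩, ⟨y, hy⟩⟩
    obtain rfl : w x = i := hx
    obtain rfl : v y = j := hy
    rfl

variable (w : α → ℕ) (v : β → ℕ) [∀ n, Finite {x // w x = n}] [∀ n, Finite {y // v y = n}]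

instance finite_fiber_add (n : ℕ) : Finite {z : α × β // w z.1 + v z.2 = n} :=
  .of_equiv _ (fiberAddEquiv w v n).symm

theorem card_fiber_add (n : ℕ) : Nat.card {z : α × β // w z.1 + v z.2 = n} =
    ∑ ij ∈ antidiagonal n, Nat.card {x // w x = ij.1} * Nat.card {y // v y = ij.2} := by
  simp_rw [Nat.card_congr (fiberAddEquiv w v n), Nat.card_sigma, Nat.card_prod]
  exact Finset.sum_coe_sort (antidiagonal n)
    fun ij => Nat.card {x // w x = ij.1} * Nat.card {y // v y = ij.2}

theorem weightSeries_prod : weightSeries R (fun z : α × β => w z.1 + v z.2) =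
    weightSeries R w * weightSeries R v := by
  ext n
  simp [PowerSeries.coeff_mul, coeff_weightSeries, card_fiber_add]

namespace TernaryTree

theorem finite_setOf_numNodes_le (n : ℕ) : {t : TernaryTree | t.numNodes ≤ n}.Finite := by
  induction n with
  | zero =>
    refine (Set.finite_singleton leaf).subset fun t ht => ?_
    cases t with
    | leaf => rfl
    | node => simp [numNodes] at ht
  | succ n ih =>
    refine ((Set.finite_singleton leaf).union
      ((ih.prod (ih.prod ih)).image fun z => node z.1 z.2.1 z.2.2)).subset fun t ht => ?_
    cases t with
    | leaf => exact .inl rfl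
    | node t₁ t₂ t₃ =>
      simp only [numNodes, Set.mem_ofPred_eq] at ht
      refine .inr ⟨(t₁, t₂, t₃), ?_, rfl⟩
      simp only [Set.mem_prod, Set.mem_ofPred_eq]
      omega

instance finite_numNodes_eq (n : ℕ) : Finite {t : TernaryTree // t.numNodes = n} :=
  ((finite_setOf_numNodes_le n).subset fun _ ht => le_of_eq ht).to_subtype

theorem card_numNodes_eq_zero : Nat.card {t : TernaryTree // t.numNodes = 0} = 1 := by
  rw [Nat.card_eq_one_iff_exists]
  refine ⟨⟨leaf, rfl⟩, ?_⟩
  rintro ⟨_ | _, ht⟩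
  · rfl
  · simp [numNodes] at ht

/-- A tree with `n + 1` nodes amounts to the triple of subtrees of its root. -/
def nodeEquiv (n : ℕ) :
    {t : TernaryTree // t.numNodes = n + 1} ≃ {z : TernaryTree × TernaryTree × TernaryTree //
      z.1.numNodes + (z.2.1.numNodes + z.2.2.numNodes) = n} where
  toFun
    | ⟨node t₁ t₂ t₃, h⟩ => ⟨(t₁, t₂, t₃), by simp only [numNodes] at h ⊢; omega⟩
  invFun z := ⟨node z.1.1 z.1.2.1 z.1.2.2, by simp only [numNodes, ← z.2, add_assoc]⟩
  left_inv := by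
    rintro ⟨_ | _, h⟩
    · simp [numNodes] at h
    · rfl

theorem weightSeries_numNodes :
    weightSeries R numNodes = 1 + PowerSeries.X * weightSeries R numNodes ^ 3 := by
  rw [pow_succ', sq, ← weightSeries_prod, ← weightSeries_prod]
  ext n
  cases n with
  | zero => simp [coeff_weightSeries, card_numNodes_eq_zero]
  | succ n =>
    simp [PowerSeries.coeff_succ_X_mul, PowerSeries.coeff_one, coeff_weightSeries,
      Nat.card_congr (nodeEquiv n)]

end TernaryTree

theorem xi_eq_weightSeries : xi = weightSeries ℚ TernaryTree.numNodes := by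
  ext k
  rw [xi, PowerSeries.coeff_mk, coeff_weightSeries]
  split_ifs with hk
  · rw [hk, TernaryTree.card_numNodes_eq_zero, Nat.cast_one]
  · rw [T_succ]

end Counting

/-- `ξ = 1 + x ξ³`. -/
theorem xi_eq_one_add_X_mul_xi_cubed :
    xi = 1 + PowerSeries.X * xi ^ 3 := by
  rw [xi_eq_weightSeries]
  exact TernaryTree.weightSeries_numNodes
end
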